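/- arXiv:2509.13709 — 2 statements merged into one kernel-verified Lean document; each statement's English description precedes it below -/
import Mathlib

section
/- 𝒫-subharmonic functions are the convex functions: Let X ⊂ ℝⁿ be open and convex and let u ∈ USC(X) with u not identically −∞. Then u is 𝒫-subharmonic on X (i.e. D^{2,+}_x u ⊂ 𝒫 for every x ∈ X) if and only if u is real-valued and convex on X. -/
open Set Filter Topology Bornology
open scoped Pointwise

noncomputable section

/-- Euclidean space `ℝⁿ`. -/
abbrev En (n : ℕ) : Type := EuclideanSpace ℝ (Fin n)

/-- The space `S(n)` of real symmetric `n×n` matrices. -/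
abbrev SymMat (n : ℕ) : Type := selfAdjoint (Matrix (Fin n) (Fin n) ℝ)

/-- The (constant coefficient) 2-jet space `J² = ℝ × ℝⁿ × S(n)`. -/
abbrev Jet (n : ℕ) : Type := ℝ × En n × SymMat n

/-- `P ≥ 0`, i.e. `P` is positive semidefinite. -/
def PSD {n : ℕ} (P : SymMat n) : Prop := (P : Matrix (Fin n) (Fin n) ℝ).PosSemidef

/-- The Hessian matrix `D²φ(x)` of `φ` at `x`. -/
def hess {n : ℕ} (φ : En n → ℝ) (x : En n) : Matrix (Fin n) (Fin n) ℝ :=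
  Matrix.of fun i j =>
    iteratedFDeriv ℝ 2 φ x ![EuclideanSpace.single i (1 : ℝ), EuclideanSpace.single j (1 : ℝ)]

/-- `A ∈ D^{2,+}_x u`: `A` is the Hessian at `x` of an upper contact function for `u` at `x`. -/
def IsUpperContactHessian {n : ℕ} (X : Set (En n)) (u : En n → EReal) (x : En n)
    (A : SymMat n) : Prop :=
  ∃ φ : En n → ℝ, ∃ V : Set (En n), IsOpen V ∧ x ∈ V ∧ V ⊆ X ∧ ContDiffOn ℝ 2 φ V ∧
    (∀ y ∈ V, u y ≤ (φ y : EReal)) ∧ u x = (φ x : EReal) ∧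
    (A : Matrix (Fin n) (Fin n) ℝ) = hess φ x

lemma hess_quad {n : ℕ} (φ : En n → ℝ) (x v : En n) :
    star v.ofLp ⬝ᵥ ((hess φ x).mulVec v.ofLp) = fderiv ℝ (fderiv ℝ φ) x v v := by
  have hv : v = ∑ i, v.ofLp i • EuclideanSpace.single i (1 : ℝ) := by
    ext j
    simp [Finset.sum_apply, Pi.single_apply]
  conv_rhs => rw [hv]
  simp only [map_sum, map_smul, _root_.sum_apply, _root_.smul_apply,
    dotProduct, Matrix.mulVec, hess, Matrix.of_apply, iteratedFDeriv_two_apply, smul_eq_mul,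
    Finset.mul_sum, star_trivial, Pi.star_apply]
  rw [Finset.sum_comm]
  refine Finset.sum_congr rfl fun i _ => Finset.sum_congr rfl fun j _ => ?_
  simp
  ring

lemma hess_herm {n : ℕ} {φ : En n → ℝ} {x : En n} (h : ContDiffAt ℝ 2 φ x) :
    (hess φ x).IsHermitian := by
  have hs : IsSymmSndFDerivAt ℝ φ x := h.isSymmSndFDerivAt (by simp)
  ext i j
  simp only [hess, Matrix.conjTranspose_apply, Matrix.of_apply, iteratedFDeriv_two_apply,
    star_trivial]
  exact hs _ _

lemma line_deriv_ev {n : ℕ} {φ : En n → ℝ} {x : En n} (h : ContDiffAt ℝ 2 φ x) (v : En n) :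
    ∀ᶠ t : ℝ in 𝓝 0, HasDerivAt (fun t : ℝ => φ (x + t • v)) (fderiv ℝ φ (x + t • v) v) t := by
  have h1 : ∀ᶠ y in 𝓝 x, DifferentiableAt ℝ φ y := by
    filter_upwards [h.eventually (by simp)] with y hy
    exact hy.differentiableAt (by norm_num)
  have hc : Tendsto (fun t : ℝ => x + t • v) (𝓝 0) (𝓝 x) := by
    have : Continuous (fun t : ℝ => x + t • v) := by fun_prop
    simpa using this.tendsto 0
  filter_upwards [hc.eventually h1] with t ht
  have hl : HasDerivAt (fun t : ℝ => x + t • v) v t := by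
    simpa using ((hasDerivAt_id t).smul_const v).const_add x
  exact ht.hasFDerivAt.comp_hasDerivAt t hl

lemma line_deriv2 {n : ℕ} {φ : En n → ℝ} {x : En n} (h : ContDiffAt ℝ 2 φ x) (v : En n) :
    HasDerivAt (fun t : ℝ => fderiv ℝ φ (x + t • v) v) (fderiv ℝ (fderiv ℝ φ) x v v) 0 := by
  have hd : DifferentiableAt ℝ (fderiv ℝ φ) x :=
    (h.fderiv_right (m := 1) (by norm_num)).differentiableAt (by norm_num)
  have hl : HasDerivAt (fun t : ℝ => x + t • v) v 0 := by
    simpa using ((hasDerivAt_id (0 : ℝ)).smul_const v).const_add x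
  have hd' : HasFDerivAt (fderiv ℝ φ) (fderiv ℝ (fderiv ℝ φ) x) (x + (0 : ℝ) • v) := by
    simpa using hd.hasFDerivAt
  have := hd'.comp_hasDerivAt (0 : ℝ) hl
  exact ((ContinuousLinearMap.apply ℝ ℝ v).hasFDerivAt).comp_hasDerivAt (0 : ℝ) this

lemma second_test {n : ℕ} {φ : En n → ℝ} {x : En n} (h : ContDiffAt ℝ 2 φ x) (v : En n)
    (hneg : fderiv ℝ (fderiv ℝ φ) x v v < 0) :
    ∃ t : ℝ → Prop, (∀ᶠ s in 𝓝 0, t s) ∧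
      ∀ s, s ≠ 0 → t s → t (-s) → φ (x + s • v) + φ (x + (-s) • v) < 2 * φ x := by
  set q := fderiv ℝ (fderiv ℝ φ) x v v with hq
  set p := fderiv ℝ φ x v with hp
  set H : ℝ → ℝ := fun t => φ (x + t • v) - p * t - (q / 4) * t ^ 2 with hH
  have e1 : ∀ᶠ t : ℝ in 𝓝 0, HasDerivAt H (fderiv ℝ φ (x + t • v) v - p - (q / 2) * t) t := by
    filter_upwards [line_deriv_ev h v] with t ht
    have := (ht.sub ((hasDerivAt_id t).const_mul p)).sub
      (((hasDerivAt_id t).pow 2).const_mul (q / 4))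
    refine this.congr_deriv ?_
    simp
    ring
  have e2 : deriv H =ᶠ[𝓝 0] fun t => fderiv ℝ φ (x + t • v) v - p - (q / 2) * t := by
    filter_upwards [e1] with t ht using ht.deriv
  have e3 : deriv (deriv H) 0 = q / 2 := by
    rw [e2.deriv_eq]
    have := ((line_deriv2 h v).sub_const p).sub ((hasDerivAt_id (0 : ℝ)).const_mul (q / 2))
    refine (this.congr_deriv (g' := q / 2) ?_).deriv
    rw [← hq]; ring
  have e4 : deriv H 0 = 0 := by
    rw [e2.eq_of_nhds]; simp [hp]
  have e5 : IsLocalMax H 0 := isLocalMax_of_deriv_deriv_neg (by rw [e3]; linarith) e4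
    e1.self_of_nhds.continuousAt
  refine ⟨fun t => H t ≤ H 0, e5, fun s hs h1 h2 => ?_⟩
  simp only [hH] at h1 h2
  simp at h1 h2
  have : 0 < s ^ 2 := by positivity
  simp only [neg_smul]
  nlinarith

lemma easy_dir {n : ℕ} (X : Set (En n)) (u : En n → EReal) (hut : ∀ x ∈ X, u x < ⊤)
    (hb : ∀ x ∈ X, u x ≠ ⊥) (hc : ConvexOn ℝ X fun x => (u x).toReal)
    (x : En n) (A : SymMat n) (hA : IsUpperContactHessian X u x A) : PSD A := by
  obtain ⟨φ, V, hV, hxV, hVX, hφ, hle, hx, hAe⟩ := hA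
  have hcd : ContDiffAt ℝ 2 φ x := hφ.contDiffAt (hV.mem_nhds hxV)
  unfold PSD
  rw [hAe]
  refine Matrix.PosSemidef.of_dotProduct_mulVec_nonneg (hess_herm hcd) fun w => ?_
  have := hess_quad φ x (WithLp.toLp 2 w)
  simp only at this
  rw [this]
  by_contra hneg
  push Not at hneg
  obtain ⟨P, hP, hlt⟩ := second_test hcd _ hneg
  set v : En n := WithLp.toLp 2 w
  have hcV : ∀ᶠ t : ℝ in 𝓝 0, x + t • v ∈ V := by
    have : Continuous (fun t : ℝ => x + t • v) := by fun_prop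
    have h2 := this.tendsto 0
    simp only [zero_smul, add_zero] at h2
    exact h2.eventually (hV.mem_nhds hxV)
  have hn : Tendsto (fun t : ℝ => -t) (𝓝 0) (𝓝 0) := by
    simpa using (continuous_neg (G := ℝ)).tendsto 0
  have hev : ∀ᶠ t : ℝ in 𝓝[≠] 0, P t ∧ P (-t) ∧ x + t • v ∈ V ∧ x + (-t) • v ∈ V :=
    nhdsWithin_le_nhds (hP.and ((hn.eventually hP).and (hcV.and (hn.eventually hcV))))
  obtain ⟨s, ⟨h1, h2, h3, h4⟩, hs⟩ := (hev.and self_mem_nhdsWithin).exists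
  have hlt := hlt s hs h1 h2
  have key : ∀ y ∈ V, (u y).toReal ≤ φ y := by
    intro y hy
    have := EReal.toReal_le_toReal (hle y hy) (hb y (hVX hy)) (EReal.coe_ne_top _)
    simpa using this
  have hxr : (u x).toReal = φ x := by rw [hx]; simp
  have hcc := hc.2 (hVX h3) (hVX h4) (show (0:ℝ) ≤ 1/2 by norm_num)
    (show (0:ℝ) ≤ 1/2 by norm_num) (by norm_num)
  have hmid : (1/2 : ℝ) • (x + s • v) + (1/2 : ℝ) • (x + (-s) • v) = x := by module
  rw [hmid] at hcc
  simp only [hxr, smul_eq_mul] at hcc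
  have := key _ h3
  have := key _ h4
  linarith

lemma max_lemma {n : ℕ} (T X : Set (En n)) (hT : IsCompact T) (hTX : T ⊆ X)
    (u : En n → EReal) (husc : UpperSemicontinuousOn u X) (hut : ∀ x ∈ X, u x < ⊤)
    (ψ : En n → ℝ) (hψ : Continuous ψ) (c : En n) (hc : c ∈ T) (hcb : u c ≠ ⊥) :
    ∃ z ∈ T, ∃ r : ℝ, u z = r ∧ ∀ y ∈ T, u y ≤ ((ψ y + (r - ψ z) : ℝ) : EReal) := by
  have hus : UpperSemicontinuousOn (fun y => u y + ((-ψ y : ℝ) : EReal)) T := by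
    refine UpperSemicontinuousOn.add' (husc.mono hTX) ?_ ?_
    · exact (continuous_coe_real_ereal.comp hψ.neg).upperSemicontinuous.upperSemicontinuousOn T
    · intro y hy
      exact EReal.continuousAt_add (Or.inr (EReal.coe_ne_bot _)) (Or.inr (EReal.coe_ne_top _))
  obtain ⟨z, hz, hmax⟩ := hus.exists_isMaxOn ⟨c, hc⟩ hT
  have hfz : ∀ y ∈ T, u y + ((-ψ y : ℝ) : EReal) ≤ u z + ((-ψ z : ℝ) : EReal) := fun y hy => hmax hy
  have hzb : u z ≠ ⊥ := by
    intro hb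
    have := hfz c hc
    rw [hb, EReal.bot_add, le_bot_iff, EReal.add_eq_bot_iff] at this
    rcases this with h | h
    · exact hcb h
    · exact EReal.coe_ne_bot _ h
  have hr : ((u z).toReal : EReal) = u z := EReal.coe_toReal (hut z (hTX hz)).ne hzb
  refine ⟨z, hz, (u z).toReal, hr.symm, fun y hy => ?_⟩
  have h := hfz y hy
  by_cases hyb : u y = ⊥
  · rw [hyb]; exact bot_le
  have hry : ((u y).toReal : EReal) = u y := EReal.coe_toReal (hut y (hTX hy)).ne hyb
  rw [← hr, ← hry] at h
  rw [← hry]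
  norm_cast at h ⊢
  linarith

lemma key_ineq {n : ℕ} (X : Set (En n)) (hX : IsOpen X) (hXc : Convex ℝ X)
    (u : En n → EReal) (husc : UpperSemicontinuousOn u X) (hut : ∀ x ∈ X, u x < ⊤)
    (hsub : ∀ x ∈ X, ∀ A : SymMat n, IsUpperContactHessian X u x A → PSD A)
    (a b : En n) (ha : a ∈ X) (hb : b ∈ X) (hab : a ≠ b) (α β : ℝ)
    (hα : u a < (α : EReal)) (hβ : u b < (β : EReal)) (t : ℝ) (ht0 : 0 < t) (ht1 : t < 1) :
    u (a + t • (b - a)) ≤ ((α + (β - α) * t : ℝ) : EReal) := by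
  by_contra hcon
  push Not at hcon
  set d := b - a with hd
  have hd0 : d ≠ 0 := sub_ne_zero.mpr hab.symm
  have hdd : ‖d‖ ^ 2 ≠ 0 := by simpa using hd0
  set s : En n → ℝ := fun y => inner ℝ d (y - a) / ‖d‖ ^ 2 with hs
  set p : En n → En n := fun y => y - a - s y • d with hp
  have hs_add : ∀ (z : En n) (τ : ℝ), s (z + τ • d) = s z + τ := by
    intro z τ
    have : z + τ • d - a = (z - a) + τ • d := by abel
    simp only [hs, this, inner_add_right, inner_smul_right, real_inner_self_eq_norm_sq]
    field_simp
  have hp_add : ∀ (z : En n) (τ : ℝ), p (z + τ • d) = p z := by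
    intro z τ
    simp only [hp, hs_add]
    module
  have hsa : s a = 0 := by simp [hs]
  have hpa : p a = 0 := by simp [hp, hsa]
  have hsC : ContDiff ℝ 2 s := by
    exact (contDiff_const.inner ℝ (contDiff_id.sub contDiff_const)).div_const _
  have hpC : ContDiff ℝ 2 p := by
    simp only [hp]
    fun_prop
  -- the point c
  set c := a + t • d with hc
  have hsc : s c = t := by rw [hc, hs_add, hsa, zero_add]
  have hpc : p c = 0 := by rw [hc, hp_add, hpa]
  have hdec : ∀ y, y = a + s y • d + p y := by
    intro y; simp only [hp]; module
  -- radius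
  have hseg : segment ℝ a b ⊆ X := hXc.segment_subset ha hb
  have hcseg : IsCompact (segment ℝ a b) := by
    rw [← convexHull_pair]
    exact (Set.toFinite {a, b}).isCompact_convexHull ℝ
  obtain ⟨δ0, hδ0, hth⟩ := hcseg.exists_cthickening_subset_open hX hseg
  have hnear : ∀ e ∈ X, ∀ γ : ℝ, u e < (γ : EReal) → ∃ η > 0, ∀ y, dist y e < η → u y < (γ : EReal) := by
    intro e he γ hγ
    have h1 := husc e he γ hγ
    rw [hX.nhdsWithin_eq he] at h1
    exact Metric.eventually_nhds_iff.mp h1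
  obtain ⟨δ1, hδ1, hna⟩ := hnear a ha α hα
  obtain ⟨δ2, hδ2, hnb⟩ := hnear b hb β hβ
  obtain ⟨δ, hδ, hδ'⟩ : ∃ δ > 0, δ < min δ0 (min δ1 δ2) := exists_between (by positivity)
  simp only [lt_min_iff] at hδ'
  obtain ⟨hl0, hl1, hl2⟩ := hδ'
  set T : Set (En n) := {y | 0 ≤ s y ∧ s y ≤ 1 ∧ ‖p y‖ ≤ δ} with hT
  have hTth : T ⊆ Metric.cthickening δ0 (segment ℝ a b) := by
    rintro y ⟨h0, h1, h2⟩
    refine Metric.mem_cthickening_of_dist_le y (a + s y • d) _ _ ?_ ?_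
    · rw [segment_eq_image']
      exact ⟨s y, ⟨h0, h1⟩, rfl⟩
    · rw [dist_eq_norm]
      have : y - (a + s y • d) = p y := by simp only [hp]; abel
      rw [this]; linarith
  have hTX : T ⊆ X := hTth.trans hth
  have hTcl : IsClosed T := by
    refine (isClosed_le continuous_const hsC.continuous).inter
      ((isClosed_le hsC.continuous continuous_const).inter
        (isClosed_le hpC.continuous.norm continuous_const))
  have hTc : IsCompact T := (hcseg.cthickening).of_isClosed_subset hTcl hTth
  have hcT : c ∈ T := by
    refine ⟨?_, ?_, ?_⟩
    · rw [hsc]; exact ht0.le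
    · rw [hsc]; exact ht1.le
    · rw [hpc]; simpa using hδ.le
  have hcb : u c ≠ ⊥ := (bot_le.trans_lt hcon).ne'
  have hcr : ((u c).toReal : EReal) = u c := EReal.coe_toReal (hut c (hTX hcT)).ne hcb
  rw [← hcr] at hcon
  have hcon' : α + (β - α) * t < (u c).toReal := by exact_mod_cast hcon
  -- bound on T
  obtain ⟨B, hB⟩ : ∃ B : ℝ, ∀ y ∈ T, u y ≤ (B : EReal) := by
    obtain ⟨z, hz, r, hr, h⟩ := max_lemma T X hTc hTX u husc hut (fun _ => 0) continuous_const c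
      hcT hcb
    exact ⟨r, fun y hy => by simpa using h y hy⟩
  set ε := (u c).toReal - (α + (β - α) * t) with hε
  have hε0 : 0 < ε := by rw [hε]; linarith
  obtain ⟨K, hK0, hK⟩ : ∃ K : ℝ, 0 ≤ K ∧ B + |α| + |β| < K * δ ^ 2 := by
    refine ⟨(abs (B + |α| + |β|) + 1) / δ ^ 2, by positivity, ?_⟩
    rw [div_mul_cancel₀ _ (by positivity)]
    linarith [le_abs_self (B + |α| + |β|)]
  set ψ : En n → ℝ := fun y => α + (β - α) * s y + ε * (s y * (1 - s y)) + K * ‖p y‖ ^ 2 with hψ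
  have hψC : ContDiff ℝ 2 ψ := by
    have := hpC.norm_sq ℝ
    simp only [hψ]
    fun_prop
  obtain ⟨z, hzT, r, hzr, hmax⟩ := max_lemma T X hTc hTX u husc hut ψ hψC.continuous c hcT hcb
  have hpos : ψ z < r := by
    have := hmax c hcT
    rw [← hcr] at this
    have h2 : (u c).toReal ≤ ψ c + (r - ψ z) := by exact_mod_cast this
    have h3 : ψ c = α + (β - α) * t + ε * (t * (1 - t)) := by
      simp only [hψ, hsc, hpc]; simp
    nlinarith [mul_pos hε0 (mul_pos ht0 ht0), mul_pos hε0 (sub_pos.mpr ht1)]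
  have hbd : α + (β - α) * s z + K * ‖p z‖ ^ 2 ≤ ψ z := by
    have : 0 ≤ ε * (s z * (1 - s z)) :=
      mul_nonneg hε0.le (mul_nonneg hzT.1 (sub_nonneg.mpr hzT.2.1))
    simp only [hψ]; linarith
  have hKp : 0 ≤ K * ‖p z‖ ^ 2 := by positivity
  have hz0 : 0 < s z := by
    refine lt_of_le_of_ne hzT.1 fun h => ?_
    have hlt : u z < α := hna z (by
      rw [dist_eq_norm]
      have : z - a = p z := by simp only [hp, ← h]; simp
      rw [this]; linarith [hzT.2.2])
    rw [hzr] at hlt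
    have hlt' : r < α := by exact_mod_cast hlt
    rw [← h] at hbd
    linarith
  have hz1 : s z < 1 := by
    refine lt_of_le_of_ne hzT.2.1 fun h => ?_
    have hlt : u z < β := hnb z (by
      rw [dist_eq_norm]
      have : z - b = p z := by simp only [hp, h, hd]; module
      rw [this]; linarith [hzT.2.2])
    rw [hzr] at hlt
    have hlt' : r < β := by exact_mod_cast hlt
    rw [h] at hbd
    linarith
  have hzp : ‖p z‖ < δ := by
    refine lt_of_le_of_ne hzT.2.2 fun h => ?_
    have h1 := hB z hzT
    rw [hzr] at h1
    have h1' : r ≤ B := by exact_mod_cast h1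
    rw [h] at hbd
    have : -|α| - |β| ≤ α + (β - α) * s z := by
      have e : α + (β - α) * s z = α * (1 - s z) + β * s z := by ring
      rw [e]
      have := neg_abs_le α
      have := neg_abs_le β
      nlinarith [abs_nonneg α, abs_nonneg β]
    linarith
  -- the contact function
  set φ : En n → ℝ := fun y => ψ y + (r - ψ z) with hφ
  have hφC : ContDiff ℝ 2 φ := hψC.add contDiff_const
  have hps := hsub z (hTX hzT) ⟨hess φ z, hess_herm hφC.contDiffAt⟩
    ⟨φ, {y | 0 < s y ∧ s y < 1 ∧ ‖p y‖ < δ},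
      (isOpen_lt continuous_const hsC.continuous).inter
      ((isOpen_lt hsC.continuous continuous_const).inter
        (isOpen_lt hpC.continuous.norm continuous_const)), ⟨hz0, hz1, hzp⟩,
      fun y hy => hTX ⟨hy.1.le, hy.2.1.le, hy.2.2.le⟩, hφC.contDiffOn,
      fun y hy => hmax y ⟨hy.1.le, hy.2.1.le, hy.2.2.le⟩, by rw [hzr]; simp [hφ], rfl⟩
  have hnn := Matrix.PosSemidef.dotProduct_mulVec_nonneg hps d.ofLp
  simp only [hess_quad] at hnn
  -- compute
  have hcomp : ∀ τ : ℝ, φ (z + τ • d) = r + (β - α + ε * (1 - 2 * s z)) * τ - ε * τ ^ 2 := by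
    intro τ
    simp only [hφ, hψ, hs_add, hp_add]
    ring
  have hd1 : ∀ τ : ℝ, HasDerivAt (fun τ : ℝ => φ (z + τ • d))
      (β - α + ε * (1 - 2 * s z) - 2 * ε * τ) τ := by
    intro τ
    have := ((((hasDerivAt_id τ).const_mul (β - α + ε * (1 - 2 * s z))).const_add r)).sub
      (((hasDerivAt_id τ).pow 2).const_mul ε)
    have h2 : (fun τ : ℝ => φ (z + τ • d)) =
        fun τ => r + (β - α + ε * (1 - 2 * s z)) * τ - ε * τ ^ 2 := funext hcomp
    rw [h2]
    refine this.congr_deriv ?_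
    simp
    ring
  have hd2 : (fun τ : ℝ => fderiv ℝ φ (z + τ • d) d) =ᶠ[𝓝 0]
      fun τ => β - α + ε * (1 - 2 * s z) - 2 * ε * τ := by
    filter_upwards [line_deriv_ev hφC.contDiffAt d] with τ hτ using hτ.unique (hd1 τ)
  have hd3 := (line_deriv2 (x := z) hφC.contDiffAt d).deriv
  rw [hd2.deriv_eq] at hd3
  have hd4 : HasDerivAt (fun τ : ℝ => β - α + ε * (1 - 2 * s z) - 2 * ε * τ) (-(2 * ε * 1)) 0 :=
    ((hasDerivAt_id (0 : ℝ)).const_mul (2 * ε)).const_sub _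
  rw [hd4.deriv] at hd3
  linarith

/-- The `𝒫`-subharmonic functions (not identically `-∞`) on an open convex set are
exactly the real-valued convex functions. -/
theorem statement_13 {n : ℕ} (X : Set (En n)) (hX : IsOpen X) (hXc : Convex ℝ X)
    (u : En n → EReal) (husc : UpperSemicontinuousOn u X) (hut : ∀ x ∈ X, u x < ⊤)
    (hne : ∃ x ∈ X, u x ≠ ⊥) :
    (∀ x ∈ X, ∀ A : SymMat n, IsUpperContactHessian X u x A → PSD A) ↔
    ((∀ x ∈ X, u x ≠ ⊥) ∧ ConvexOn ℝ X fun x => (u x).toReal) := by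
  constructor
  swap
  · rintro ⟨hb, hc⟩ x _ A hA
    exact easy_dir X u hut hb hc x A hA
  intro hsub
  have key := key_ineq X hX hXc u husc hut hsub
  have hbot : ∀ x ∈ X, u x ≠ ⊥ := by
    intro x0 hx0 h0
    obtain ⟨y, hy, hyb⟩ := hne
    have hne' : x0 ≠ y := by rintro rfl; exact hyb h0
    have hcont : Continuous (fun t : ℝ => y + t • (y - x0)) := by fun_prop
    have h2 := hcont.tendsto 0
    simp only [zero_smul, add_zero] at h2
    have hev : ∀ᶠ t : ℝ in 𝓝[>] 0, y + t • (y - x0) ∈ X :=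
      nhdsWithin_le_nhds (h2.eventually (hX.mem_nhds hy))
    obtain ⟨η, hηX, hη⟩ := (hev.and self_mem_nhdsWithin).exists
    have hη : 0 < η := hη
    set b := y + η • (y - x0) with hb
    have hbd : b - x0 = (1 + η) • (y - x0) := by rw [hb]; module
    have hxb : x0 ≠ b := by
      intro h
      have : b - x0 = 0 := by rw [← h]; simp
      rw [hbd, smul_eq_zero] at this
      rcases this with h | h
      · linarith
      · exact hne' (sub_eq_zero.mp h).symm
    obtain ⟨β, hβ, _⟩ := EReal.lt_iff_exists_real_btwn.mp (hut b hηX)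
    set t := 1 / (1 + η) with ht
    have ht0 : 0 < t := by positivity
    have ht1 : t < 1 := by rw [ht, div_lt_one (by positivity)]; linarith
    have hyt : x0 + t • (b - x0) = y := by
      rw [hbd, smul_smul, ht, one_div, inv_mul_cancel₀ (by positivity)]; module
    have hyr : ((u y).toReal : EReal) = u y := EReal.coe_toReal (hut y hy).ne hyb
    set α := ((u y).toReal - 1 - β * t) / (1 - t) with hα
    have := key x0 b hx0 hηX hxb α β (by rw [h0]; exact EReal.bot_lt_coe _) hβ t ht0 ht1
    rw [hyt, ← hyr] at this
    have h3 : (u y).toReal ≤ α + (β - α) * t := by exact_mod_cast this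
    have h4 : α * (1 - t) = (u y).toReal - 1 - β * t :=
      div_mul_cancel₀ _ (by linarith)
    linarith
  refine ⟨hbot, hXc, ?_⟩
  intro x hx y hy a b ha hb hab
  simp only [smul_eq_mul]
  rcases eq_or_lt_of_le ha with rfl | ha
  · simp at hab; subst hab; simp
  rcases eq_or_lt_of_le hb with rfl | hb
  · simp at hab; subst hab; simp
  by_cases hxy : x = y
  · subst hxy
    rw [← add_smul, ← add_mul, hab]; simp
  have hr : ∀ z ∈ X, ((u z).toReal : EReal) = u z := fun z hz =>
    EReal.coe_toReal (hut z hz).ne (hbot z hz)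
  have hz : a • x + b • y ∈ X := hXc hx hy ha.le hb.le hab
  refine le_of_forall_pos_le_add fun e he => ?_
  have hlt : ∀ z ∈ X, u z < (((u z).toReal + e : ℝ) : EReal) := by
    intro z hz
    conv_lhs => rw [← hr z hz]
    exact_mod_cast (by linarith)
  have := key x y hx hy hxy _ _ (hlt x hx) (hlt y hy) b hb (by linarith)
  have hxe : x + b • (y - x) = a • x + b • y := by
    rw [← eq_sub_iff_add_eq] at hab; rw [hab]; module
  rw [hxe, ← hr _ hz] at this
  have h3 : (u (a • x + b • y)).toReal ≤ (u x).toReal + e + ((u y).toReal + e - ((u x).toReal + e)) * b := by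
    exact_mod_cast this
  have ha' : a = 1 - b := by linarith
  rw [ha'] at h3 ⊢
  linarith

end
end

section
/- Constant coefficient subharmonic addition theorem: Let M ⊂ J² be a monotonicity cone subequation and F ⊂ J² a constant coefficient subequation which is M-monotone, i.e. F + M ⊂ F. Then for every open set X ⊂ ℝⁿ, if u ∈ USC(X) is F-subharmonic on X and v ∈ USC(X) is \widetilde{F}-subharmonic on X, then u + v ∈ USC(X) is \widetilde{M}-subharmonic on X. -/
open Set Filter Topology Bornology
open scoped Pointwise

noncomputable section

/-- `J ∈ J^{2,+}_x u`: `J = (φ(x), Dφ(x), D²φ(x))` for some `C²` function `φ` defined near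
`x` (inside `X`) with `u ≤ φ` near `x` and `u(x) = φ(x)`. -/
def IsUpperTestJet {n : ℕ} (X : Set (En n)) (u : En n → EReal) (x : En n) (J : Jet n) : Prop :=
  ∃ φ : En n → ℝ, ∃ V : Set (En n), IsOpen V ∧ x ∈ V ∧ V ⊆ X ∧ ContDiffOn ℝ 2 φ V ∧
    (∀ y ∈ V, u y ≤ (φ y : EReal)) ∧ u x = (φ x : EReal) ∧
    J.1 = φ x ∧ J.2.1 = gradient φ x ∧ (J.2.2 : Matrix (Fin n) (Fin n) ℝ) = hess φ x

/-- `J ∈ J^{2,-}_x u`: `J = (φ(x), Dφ(x), D²φ(x))` for some `C²` function `φ` defined near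
`x` (inside `X`) with `u ≥ φ` near `x` and `u(x) = φ(x)`. -/
def IsLowerTestJet {n : ℕ} (X : Set (En n)) (u : En n → EReal) (x : En n) (J : Jet n) : Prop :=
  ∃ φ : En n → ℝ, ∃ V : Set (En n), IsOpen V ∧ x ∈ V ∧ V ⊆ X ∧ ContDiffOn ℝ 2 φ V ∧
    (∀ y ∈ V, (φ y : EReal) ≤ u y) ∧ u x = (φ x : EReal) ∧
    J.1 = φ x ∧ J.2.1 = gradient φ x ∧ (J.2.2 : Matrix (Fin n) (Fin n) ℝ) = hess φ x

/-- `u ∈ USC(X)`: upper semicontinuous on `X` with values in `[-∞, ∞)`. -/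
def USCOn {n : ℕ} (u : En n → EReal) (X : Set (En n)) : Prop :=
  UpperSemicontinuousOn u X ∧ ∀ x ∈ X, u x < ⊤

/-- `u ∈ LSC(X)`: lower semicontinuous on `X` with values in `(-∞, ∞]`. -/
def LSCOn {n : ℕ} (u : En n → EReal) (X : Set (En n)) : Prop :=
  LowerSemicontinuousOn u X ∧ ∀ x ∈ X, ⊥ < u x

/-- A constant coefficient subequation `F ⊆ J²`: closed, `F = closure (interior F)`, and
satisfying the positivity property (P) and negativity property (N). -/
def IsCCSubequation {n : ℕ} (F : Set (Jet n)) : Prop :=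
  IsClosed F ∧ F = closure (interior F) ∧
  (∀ J ∈ F, ∀ P : SymMat n, PSD P → (J.1, J.2.1, J.2.2 + P) ∈ F) ∧
  (∀ J ∈ F, ∀ s : ℝ, s ≤ 0 → (J.1 + s, J.2.1, J.2.2) ∈ F)

/-- A monotonicity cone subequation: a constant coefficient subequation which is also a
convex cone with vertex at the origin. -/
def IsMonotonicityConeSubequation {n : ℕ} (M : Set (Jet n)) : Prop :=
  IsCCSubequation M ∧ Convex ℝ M ∧ (0 : Jet n) ∈ M ∧
  (∀ t : ℝ, 0 ≤ t → ∀ J ∈ M, t • J ∈ M)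

/-- The Dirichlet dual `(−interior S)ᶜ` of a constant coefficient set `S ⊆ J²`. -/
def dualJ {n : ℕ} (S : Set (Jet n)) : Set (Jet n) := (-(interior S))ᶜ

/-- `u` is `S`-subharmonic on `X` for a constant coefficient set `S ⊆ J²`. -/
def CCSubharmonicOn {n : ℕ} (S : Set (Jet n)) (u : En n → EReal) (X : Set (En n)) : Prop :=
  ∀ x ∈ X, ∀ J : Jet n, IsUpperTestJet X u x J → J ∈ S

section A
variable {E : Type*} [NormedAddCommGroup E] [InnerProductSpace ℝ E]

theorem par_lip (w : E → ℝ) (p : E → E) (S K : Set E) (C : ℝ) (hC : 0 ≤ C)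
    (h : ∀ y ∈ S, ∀ z ∈ K, |w z - w y - inner ℝ (p y) (z - y)| ≤ C * ‖z - y‖ ^ 2)
    (hSK : ∀ y ∈ S, ∀ y' ∈ S, ∀ e : E, ‖e‖ ≤ ‖y - y'‖ → y' + e ∈ K) :
    LipschitzOnWith (Real.toNNReal (6 * C)) p S := by
  apply LipschitzOnWith.of_dist_le_mul
  intro y hy y' hy'
  rw [Real.coe_toNNReal _ (by positivity), dist_eq_norm, dist_eq_norm]
  rcases eq_or_ne y y' with rfl | hne
  · simp
  rcases eq_or_ne (p y - p y') 0 with hv | hv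
  · rw [hv]; simp; positivity
  set v := p y - p y' with hvdef
  set d := ‖y - y'‖ with hd
  have hdpos : 0 < d := norm_pos_iff.2 (sub_ne_zero.2 hne)
  have hvpos : 0 < ‖v‖ := norm_pos_iff.2 hv
  set e : E := (d / ‖v‖) • v with he
  have hen : ‖e‖ = d := by
    rw [he, norm_smul, Real.norm_of_nonneg (by positivity)]; field_simp
  have hin : inner ℝ v e = d * ‖v‖ := by
    rw [he, inner_smul_right, real_inner_self_eq_norm_sq]; field_simp
  have h1 := h y hy (y' + e) (hSK y hy y' hy' e hen.le)
  have h2 := h y' hy' (y' + e) (hSK y hy y' hy' e hen.le)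
  have h3 := h y hy y' (by simpa using hSK y hy y' hy' 0 (by simp))
  have e1 : inner ℝ (p y) (y' + e - y) = inner ℝ (p y) (y' - y) + inner ℝ (p y) e := by
    rw [← inner_add_right]; congr 1; abel
  have e2 : y' + e - y' = e := by abel
  have n1 : ‖y' + e - y‖ ≤ 2 * d := by
    have : y' + e - y = e - (y - y') := by abel
    rw [this]; refine (norm_sub_le _ _).trans ?_; rw [hen]; linarith
  have n3 : ‖y' - y‖ = d := by rw [hd, norm_sub_rev]
  have n1' : C * ‖y' + e - y‖ ^ 2 ≤ C * (2 * d) ^ 2 := by gcongr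
  rw [e1] at h1
  rw [e2, hen] at h2
  rw [n3] at h3
  have hin' : inner ℝ (p y) e - inner ℝ (p y') e = d * ‖v‖ := by
    rw [← inner_sub_left]; exact hin
  rw [abs_le] at h1 h2 h3
  have : d * ‖v‖ ≤ d * (6 * C * d) := by nlinarith
  exact le_of_mul_le_mul_left this hdpos

theorem infDist_small [FiniteDimensional ℝ E] (S : Set E) (y0 : E) (hy0 : y0 ∈ S)
    (hd : DifferentiableAt ℝ (fun z => Metric.infDist z S) y0) (σ : ℝ) (hσ : 0 < σ) :
    ∃ ρ > 0, ∀ z, ‖z - y0‖ < ρ → ∃ e ∈ S, ‖z - e‖ ≤ σ * ‖z - y0‖ := by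
  have h0 : Metric.infDist y0 S = 0 := Metric.infDist_zero_of_mem hy0
  have hmin : IsLocalMin (fun z => Metric.infDist z S) y0 := by
    refine Filter.Eventually.of_forall fun z => ?_
    simp only [h0]; exact Metric.infDist_nonneg
  have hder := hd.hasFDerivAt
  rw [hmin.fderiv_eq_zero, hasFDerivAt_iff_isLittleO] at hder
  have := hder.def (c := σ / 2) (by positivity)
  obtain ⟨ρ, hρ, H⟩ := Metric.eventually_nhds_iff.1 this
  refine ⟨ρ, hρ, fun z hz => ?_⟩
  have h := H (y := z) (by rwa [dist_eq_norm])
  simp [h0] at h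
  rcases eq_or_ne z y0 with rfl | hne
  · exact ⟨z, hy0, by simp⟩
  have hpos : 0 < ‖z - y0‖ := norm_pos_iff.2 (sub_ne_zero.2 hne)
  have hlt : Metric.infDist z S < σ * ‖z - y0‖ := by
    have := le_abs_self (Metric.infDist z S)
    nlinarith [mul_pos hσ hpos]
  obtain ⟨e, he, h'⟩ := (Metric.infDist_lt_iff ⟨y0, hy0⟩).1 hlt
  exact ⟨e, he, by rw [← dist_eq_norm]; exact h'.le⟩

theorem expansion [FiniteDimensional ℝ E] (w : E → ℝ) (p : E → E) (S K : Set E) (C : ℝ) (hC : 0 ≤ C)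
    (h : ∀ y ∈ S, ∀ z ∈ K, |w z - w y - inner ℝ (p y) (z - y)| ≤ C * ‖z - y‖ ^ 2)
    (y0 : E) (hy0 : y0 ∈ S) (hK : K ∈ 𝓝 y0) (D : E →L[ℝ] E)
    (hD : HasFDerivWithinAt p D S y0)
    (hd : DifferentiableAt ℝ (fun z => Metric.infDist z S) y0) (κ : ℝ) (hκ : 0 < κ) :
    ∃ ρ > 0, ∀ x : E, ‖x‖ < ρ →
      |w (y0 + x) - w y0 - inner ℝ (p y0) x - inner ℝ (D x) x / 2| ≤ κ * ‖x‖ ^ 2 := by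
  set C2 : ℝ := 5 * C + 2 + ‖D‖ with hC2
  have hC2pos : 0 < C2 := by positivity
  obtain ⟨N, hN⟩ := exists_nat_gt ((C2 + ‖D‖) / κ)
  have hNpos : (0 : ℝ) < N := lt_of_le_of_lt (by positivity) hN
  have hN1 : (1 : ℝ) ≤ N := by
    have : 0 < N := by exact_mod_cast hNpos
    exact_mod_cast this
  have hσpos : (0 : ℝ) < 1 / N := by positivity
  obtain ⟨ρ1, hρ1, H1⟩ := infDist_small S y0 hy0 hd (1 / N) hσpos
  rw [hasFDerivWithinAt_iff_isLittleO] at hD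
  have hD' := hD.def (c := 1 / N) hσpos
  rw [eventually_nhdsWithin_iff] at hD'
  obtain ⟨ρ2, hρ2, H2⟩ := Metric.eventually_nhds_iff.1 hD'
  obtain ⟨ρ3, hρ3, H3⟩ := Metric.mem_nhds_iff.1 hK
  refine ⟨min ρ1 (min (ρ2 / 2) ρ3), by positivity, fun x hx => ?_⟩
  have hx1 : ‖x‖ < ρ1 := hx.trans_le (min_le_left _ _)
  have hx2 : ‖x‖ < ρ2 / 2 := hx.trans_le ((min_le_right _ _).trans (min_le_left _ _))
  have hx3 : ‖x‖ < ρ3 := hx.trans_le ((min_le_right _ _).trans (min_le_right _ _))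
  have hx0 : 0 ≤ ‖x‖ := norm_nonneg x
  set X := ‖x‖ with hX
  -- scaled norms
  have hsc : ∀ t : ℝ, 0 ≤ t → t ≤ 1 → ‖t • x‖ ≤ X := by
    intro t h0 h1
    rw [norm_smul, Real.norm_of_nonneg h0]; nlinarith
  have hinK : ∀ t : ℝ, 0 ≤ t → t ≤ 1 → y0 + t • x ∈ K := by
    intro t h0 h1
    apply H3; rw [Metric.mem_ball, dist_eq_norm, add_sub_cancel_left]
    exact (hsc t h0 h1).trans_lt hx3
  have hDx : |inner ℝ (D x) x| ≤ ‖D‖ * X ^ 2 := by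
    refine (abs_real_inner_le_norm _ _).trans ?_
    have := D.le_opNorm x
    nlinarith
  -- one step
  have step : ∀ k : ℕ, k + 1 ≤ N →
      |w (y0 + (((k : ℝ) + 1) / N) • x) - w (y0 + ((k : ℝ) / N) • x) - inner ℝ (p y0) x / N
        - (k : ℝ) / N ^ 2 * inner ℝ (D x) x| ≤ C2 * X ^ 2 / N ^ 2 := by
    intro k hk
    have hk' : (k : ℝ) + 1 ≤ N := by exact_mod_cast hk
    have ht0 : (0 : ℝ) ≤ k / N := by positivity
    have ht1 : (k : ℝ) / N ≤ 1 := by rw [div_le_one hNpos]; linarith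
    have hs0 : (0 : ℝ) ≤ (k + 1) / N := by positivity
    have hs1 : ((k : ℝ) + 1) / N ≤ 1 := by rw [div_le_one hNpos]; linarith
    set z := y0 + ((k : ℝ) / N) • x with hz
    set z' := y0 + (((k : ℝ) + 1) / N) • x with hz'
    have hzz : z' = z + (1 / (N : ℝ)) • x := by
      rw [hz, hz', add_assoc, ← add_smul]; congr 2; ring
    have hzn : ‖z - y0‖ ≤ X := by rw [hz, add_sub_cancel_left]; exact hsc _ ht0 ht1
    obtain ⟨e, heS, hez⟩ := H1 z (hzn.trans_lt hx1)
    have hez' : ‖z - e‖ ≤ X / N := by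
      refine hez.trans ?_
      rw [div_mul_eq_mul_div, one_mul]; gcongr
    have hXN : X / N ≤ X := div_le_self hx0 hN1
    have hey : ‖e - y0‖ ≤ 2 * X := by
      have : e - y0 = (z - y0) - (z - e) := by abel
      rw [this]; refine (norm_sub_le _ _).trans ?_; linarith
    have hpe := H2 (y := e) (by rw [dist_eq_norm]; linarith) heS
    have a1 := h e heS z' (hinK _ hs0 hs1)
    have a2 := h e heS z (hinK _ ht0 ht1)
    have hz'e : ‖z' - e‖ ≤ 2 * (X / N) := by
      have : z' - e = (z - e) + (1 / (N : ℝ)) • x := by rw [hzz]; abel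
      rw [this]; refine (norm_add_le _ _).trans ?_
      rw [norm_smul, Real.norm_of_nonneg hσpos.le, div_mul_eq_mul_div, one_mul]; linarith
    have a1' : C * ‖z' - e‖ ^ 2 ≤ C * (2 * (X / N)) ^ 2 := by gcongr
    have a2' : C * ‖z - e‖ ^ 2 ≤ C * (X / N) ^ 2 := by gcongr
    have e1 : inner ℝ (p e) (z' - e) = inner ℝ (p e) (z - e) + inner ℝ (p e) x / N := by
      have : z' - e = (z - e) + (1 / (N : ℝ)) • x := by rw [hzz]; abel
      rw [this, inner_add_right, inner_smul_right]; ring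
    -- gradient error
    have ge : ‖p e - p y0 - ((k : ℝ) / N) • D x‖ ≤ (2 + ‖D‖) * (X / N) := by
      have : p e - p y0 - ((k : ℝ) / N) • D x
          = (p e - p y0 - D (e - y0)) - D (z - e) := by
        have : D (e - y0) + D (z - e) = ((k : ℝ) / N) • D x := by
          rw [← map_add, ← map_smul]; congr 1; rw [hz]; abel
        rw [← this]; abel
      rw [this]; refine (norm_sub_le _ _).trans ?_
      have b1 : ‖p e - p y0 - D (e - y0)‖ ≤ 2 * (X / N) := by
        refine hpe.trans ?_
        have : 1 / (N : ℝ) * ‖e - y0‖ ≤ 1 / N * (2 * X) := by gcongr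
        refine this.trans (le_of_eq ?_); ring
      have b2 : ‖D (z - e)‖ ≤ ‖D‖ * (X / N) :=
        (D.le_opNorm _).trans (by gcongr)
      linarith
    have ge2 : |inner ℝ (p e) x - inner ℝ (p y0) x - (k : ℝ) / N * inner ℝ (D x) x|
        ≤ (2 + ‖D‖) * (X / N) * X := by
      have : inner ℝ (p e) x - inner ℝ (p y0) x - (k : ℝ) / N * inner ℝ (D x) x
          = inner ℝ (p e - p y0 - ((k : ℝ) / N) • D x) x := by
        rw [inner_sub_left, inner_sub_left, inner_smul_left]; simp
      rw [this]
      refine (abs_real_inner_le_norm _ _).trans ?_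
      gcongr
    have ge3 : |inner ℝ (p e) x / N - inner ℝ (p y0) x / N - (k : ℝ) / N ^ 2 * inner ℝ (D x) x|
        ≤ (2 + ‖D‖) * (X / N) ^ 2 := by
      have e3 : inner ℝ (p e) x / N - inner ℝ (p y0) x / N - (k : ℝ) / N ^ 2 * inner ℝ (D x) x
        = (inner ℝ (p e) x - inner ℝ (p y0) x - (k : ℝ) / N * inner ℝ (D x) x) / N := by
        field_simp
      rw [e3, abs_div, abs_of_pos hNpos, div_le_iff₀ hNpos]
      refine ge2.trans (le_of_eq ?_); field_simp
    have tgt : C2 * X ^ 2 / N ^ 2 = C * (2 * (X / N)) ^ 2 + C * (X / N) ^ 2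
        + (2 + ‖D‖) * (X / N) ^ 2 := by
      rw [hC2]; field_simp; ring
    rw [tgt]
    rw [e1] at a1
    rw [abs_le] at a1 a2 ge3 ⊢
    constructor <;> linarith
  -- induction
  have ind : ∀ k : ℕ, k ≤ N →
      |w (y0 + ((k : ℝ) / N) • x) - w y0 - (k : ℝ) / N * inner ℝ (p y0) x
        - (k : ℝ) * (k - 1) / (2 * N ^ 2) * inner ℝ (D x) x| ≤ k * (C2 * X ^ 2 / N ^ 2) := by
    intro k
    induction k with
    | zero => intro _; simp
    | succ k ih =>
      intro hk
      have i1 := ih (by omega)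
      have i2 := step k hk
      push_cast
      have e1 : ((k : ℝ) + 1) * (k + 1 - 1) / (2 * N ^ 2) * inner ℝ (D x) x
        = (k : ℝ) * (k - 1) / (2 * N ^ 2) * inner ℝ (D x) x + (k : ℝ) / N ^ 2 * inner ℝ (D x) x := by
        field_simp; ring
      have e2 : ((k : ℝ) + 1) / N * inner ℝ (p y0) x
        = (k : ℝ) / N * inner ℝ (p y0) x + inner ℝ (p y0) x / N := by
        field_simp
      rw [e1, e2]
      rw [abs_le] at i1 i2 ⊢
      constructor <;> linarith
  have fin := ind N le_rfl
  rw [div_self hNpos.ne', one_smul, one_mul] at fin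
  have e1 : (N : ℝ) * (N - 1) / (2 * N ^ 2) * inner ℝ (D x) x
      = inner ℝ (D x) x / 2 - inner ℝ (D x) x / (2 * N) := by field_simp
  have e2 : (N : ℝ) * (C2 * X ^ 2 / N ^ 2) = C2 * X ^ 2 / N := by field_simp
  rw [e1, e2] at fin
  have e3 : |inner ℝ (D x) x / (2 * N)| ≤ ‖D‖ * X ^ 2 / N := by
    rw [abs_div, abs_of_pos (by positivity : (0 : ℝ) < 2 * N)]
    have : 0 ≤ ‖D‖ * X ^ 2 := by positivity
    apply div_le_div₀ this hDx hNpos; linarith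
  have e4 : C2 * X ^ 2 / N + ‖D‖ * X ^ 2 / N ≤ κ * X ^ 2 := by
    have : C2 * X ^ 2 / N + ‖D‖ * X ^ 2 / N = (C2 + ‖D‖) / N * X ^ 2 := by ring
    rw [this]
    have : (C2 + ‖D‖) / N ≤ κ := by
      rw [div_lt_iff₀ hκ] at hN
      rw [div_le_iff₀ hNpos]; linarith
    gcongr
  rw [abs_le] at fin e3 ⊢
  constructor <;> linarith

theorem good_point [FiniteDimensional ℝ E] [MeasurableSpace E] [BorelSpace E] (g : E → E) (S : Set E) (C : NNReal)
    (hg : LipschitzOnWith C g S) (τ : ℝ) (hτ : 0 < τ) (hb : Metric.ball 0 τ ⊆ g '' S)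
    (P : E → Prop)
    (hP : ∀ᵐ x ∂(MeasureTheory.Measure.hausdorffMeasure (X := E) (Module.finrank ℝ E)), P x) :
    ∃ y ∈ S, P y := by
  by_contra hcon
  push Not at hcon
  have h1 := MeasureTheory.measure_mono_null (fun x hx => hcon x hx) hP
  have h2 := hg.hausdorffMeasure_image_le (d := Module.finrank ℝ E) (by positivity)
  rw [h1, mul_zero] at h2
  have h3 := MeasureTheory.measure_mono_null hb (nonpos_iff_eq_zero.1 h2)
  exact (Metric.measure_ball_pos _ (0 : E) hτ).ne' h3

end A

section B
variable {E : Type*} [NormedAddCommGroup E] [InnerProductSpace ℝ E]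

theorem supconv (K : Set E) (hK : IsCompact K) (hne : K.Nonempty) (u : E → ℝ)
    (hu : UpperSemicontinuousOn u K) (L : ℝ) :
    ∃ a : E → E, (∀ y, a y ∈ K) ∧
      ∀ y, ∀ a' ∈ K, u a' - L / 2 * ‖y - a'‖ ^ 2 ≤ u (a y) - L / 2 * ‖y - a y‖ ^ 2 := by
  have : ∀ y : E, ∃ a ∈ K, ∀ a' ∈ K,
      u a' - L / 2 * ‖y - a'‖ ^ 2 ≤ u a - L / 2 * ‖y - a‖ ^ 2 := by
    intro y
    have hc : Continuous fun a : E => - (L / 2 * ‖y - a‖ ^ 2) := by fun_prop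
    have h2 : UpperSemicontinuousOn (fun a => u a + - (L / 2 * ‖y - a‖ ^ 2)) K :=
      hu.add (hc.upperSemicontinuous.upperSemicontinuousOn K)
    obtain ⟨a, ha, hmax⟩ := h2.exists_isMaxOn hne hK
    exact ⟨a, ha, fun a' ha' => by simpa [sub_eq_add_neg] using hmax ha'⟩
  choose a h1 h2 using this
  exact ⟨a, h1, h2⟩

theorem loc [FiniteDimensional ℝ E] (x0 : E) (r : ℝ) (hr : 0 < r) (u v Q : E → ℝ)
    (hu : UpperSemicontinuousOn u (Metric.closedBall x0 r))
    (hv : UpperSemicontinuousOn v (Metric.closedBall x0 r)) (hQ : Continuous Q)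
    (hlt : ∀ z ∈ Metric.closedBall x0 r, z ≠ x0 → u z + v z < Q z) (δ : ℝ) (hδ : 0 < δ) :
    ∃ L > 0, ∃ τ > 0, ∀ y ∈ Metric.closedBall x0 r, ∀ a ∈ Metric.closedBall x0 r,
      ∀ b ∈ Metric.closedBall x0 r, ∀ p : E, ‖p‖ ≤ τ →
      0 ≤ u a + v b - Q y - inner ℝ p (y - x0) - L / 2 * ‖y - a‖ ^ 2 - L / 2 * ‖y - b‖ ^ 2 →
      ‖y - x0‖ < δ ∧ ‖a - x0‖ < δ ∧ ‖b - x0‖ < δ := by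
  by_contra hcon
  push Not at hcon
  have hK : IsCompact (Metric.closedBall x0 r) := isCompact_closedBall x0 r
  have hne : (Metric.closedBall x0 r).Nonempty := ⟨x0, by simp [hr.le]⟩
  have key := fun n : ℕ => hcon ((n : ℝ) + 1) (by positivity) (1 / ((n : ℝ) + 1)) (by positivity)
  choose y hy a ha b hb p hp hpos hbad using key
  obtain ⟨ua, -, hua⟩ := hu.exists_isMaxOn hne hK
  obtain ⟨va, -, hva⟩ := hv.exists_isMaxOn hne hK
  obtain ⟨qa, -, hqa⟩ := hK.exists_isMinOn hne hQ.continuousOn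
  set B : ℝ := |u ua| + |v va| + |Q qa| + r with hB
  have hinner : ∀ n, |inner ℝ (p n) (y n - x0)| ≤ 1 / ((n : ℝ) + 1) * r := by
    intro n
    refine (abs_real_inner_le_norm _ _).trans ?_
    have : ‖y n - x0‖ ≤ r := by simpa [dist_eq_norm] using hy n
    have := hp n
    gcongr
  have hsum : ∀ n, ‖y n - a n‖ ^ 2 + ‖y n - b n‖ ^ 2 ≤ 2 * B / ((n : ℝ) + 1) := by
    intro n
    have h1 : u (a n) ≤ u ua := hua (ha n)
    have h2 : v (b n) ≤ v va := hva (hb n)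
    have h3 : Q qa ≤ Q (y n) := hqa (hy n)
    have h4 := hinner n
    have h5 : 1 / ((n : ℝ) + 1) * r ≤ r := by
      rw [div_mul_eq_mul_div, one_mul]; apply div_le_self hr.le; linarith [n.cast_nonneg (α := ℝ)]
    have h6 := hpos n
    rw [le_div_iff₀ (by positivity)]
    have := le_abs_self (u ua); have := le_abs_self (v va); have := neg_abs_le (Q qa)
    rw [abs_le] at h4
    rw [hB]; linarith
  have hlim : Tendsto (fun n : ℕ => 2 * B / ((n : ℝ) + 1)) atTop (𝓝 0) := by
    have := (tendsto_one_div_add_atTop_nhds_zero_nat (𝕜 := ℝ)).const_mul (2 * B)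
    simpa [div_eq_mul_inv] using this
  have hya : Tendsto (fun n => a n - y n) atTop (𝓝 0) := by
    rw [tendsto_zero_iff_norm_tendsto_zero]
    have : Tendsto (fun n => ‖a n - y n‖ ^ 2) atTop (𝓝 0) :=
      squeeze_zero (fun n => by positivity) (fun n => by
        have := hsum n; rw [norm_sub_rev]; nlinarith [sq_nonneg ‖y n - b n‖]) hlim
    simpa using this.sqrt
  have hyb : Tendsto (fun n => b n - y n) atTop (𝓝 0) := by
    rw [tendsto_zero_iff_norm_tendsto_zero]
    have : Tendsto (fun n => ‖b n - y n‖ ^ 2) atTop (𝓝 0) :=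
      squeeze_zero (fun n => by positivity) (fun n => by
        have := hsum n; rw [norm_sub_rev]; nlinarith [sq_nonneg ‖y n - a n‖]) hlim
    simpa using this.sqrt
  have hpl : Tendsto (fun n => inner ℝ (p n) (y n - x0)) atTop (𝓝 0) := by
    have hl := (tendsto_one_div_add_atTop_nhds_zero_nat (𝕜 := ℝ)).mul_const r
    rw [zero_mul] at hl
    exact squeeze_zero_norm (fun n => by simpa using hinner n) hl
  obtain ⟨yl, hyl, φ, hφ, hconv⟩ := hK.tendsto_subseq hy
  have hφt := hφ.tendsto_atTop
  have ca : Tendsto (fun n => a (φ n)) atTop (𝓝 yl) := by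
    have := (hya.comp hφt).add hconv; simpa using this
  have cb : Tendsto (fun n => b (φ n)) atTop (𝓝 yl) := by
    have := (hyb.comp hφt).add hconv; simpa using this
  have cy : Tendsto (fun n => y (φ n)) atTop (𝓝 yl) := hconv
  rcases eq_or_ne yl x0 with rfl | hne'
  · have e := fun (s : ℕ → E) (hs : Tendsto s atTop (𝓝 yl)) =>
      (Metric.tendsto_nhds.1 hs δ hδ)
    obtain ⟨n, h1, h2, h3⟩ := ((e _ cy).and ((e _ ca).and (e _ cb))).exists
    rw [dist_eq_norm] at h1 h2 h3
    exact absurd (hbad (φ n) h1 h2) (not_le.2 h3)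
  · have hgap := hlt yl hyl hne'
    set G := Q yl - (u yl + v yl) with hG
    have hGpos : 0 < G := by linarith
    have ca' : Tendsto (fun n => a (φ n)) atTop (𝓝[Metric.closedBall x0 r] yl) :=
      tendsto_nhdsWithin_iff.2 ⟨ca, Eventually.of_forall fun n => ha _⟩
    have cb' : Tendsto (fun n => b (φ n)) atTop (𝓝[Metric.closedBall x0 r] yl) :=
      tendsto_nhdsWithin_iff.2 ⟨cb, Eventually.of_forall fun n => hb _⟩
    have e1 := ca'.eventually (hu yl hyl (u yl + G / 4) (by linarith))
    have e2 := cb'.eventually (hv yl hyl (v yl + G / 4) (by linarith))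
    have e3 := ((hQ.tendsto yl).comp cy).eventually (lt_mem_nhds (show Q yl - G / 4 < Q yl by linarith))
    have e4 := (hpl.comp hφt).eventually (lt_mem_nhds (show - (G / 4) < 0 by linarith))
    obtain ⟨n, h1, h2, h3, h4⟩ := (e1.and (e2.and (e3.and e4))).exists
    simp only [Function.comp] at h3 h4
    have h5 := hpos (φ n)
    have : 0 ≤ (((φ n : ℕ) : ℝ) + 1) / 2 * ‖y (φ n) - a (φ n)‖ ^ 2 := by positivity
    have : 0 ≤ (((φ n : ℕ) : ℝ) + 1) / 2 * ‖y (φ n) - b (φ n)‖ ^ 2 := by positivity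
    linarith

theorem lower_par (u : E → ℝ) (a : E → E) (K : Set E) (L : ℝ) (haK : ∀ y, a y ∈ K)
    (h : ∀ y, ∀ a' ∈ K, u a' - L / 2 * ‖y - a'‖ ^ 2 ≤ u (a y) - L / 2 * ‖y - a y‖ ^ 2) (y z : E) :
    (u (a y) - L / 2 * ‖y - a y‖ ^ 2) + inner ℝ (L • (a y - y)) (z - y) - L / 2 * ‖z - y‖ ^ 2
      ≤ u (a z) - L / 2 * ‖z - a z‖ ^ 2 := by
  have h1 := h z (a y) (haK y)
  have h2 : z - a y = (z - y) - (a y - y) := by abel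
  have h3 := norm_sub_sq_real (z - y) (a y - y)
  rw [h2, h3] at h1
  rw [inner_smul_left, real_inner_comm, norm_sub_rev y (a y)]
  simp only [conj_trivial]
  linarith

theorem grad_unique (f : E → ℝ) (K : Set E) (y g p : E) (Λ : ℝ) (hΛ : 0 < Λ) (hK : K ∈ 𝓝 y)
    (h1 : ∀ z ∈ K, f y + inner ℝ g (z - y) - Λ * ‖z - y‖ ^ 2 ≤ f z)
    (h2 : ∀ z ∈ K, f z ≤ f y + inner ℝ p (z - y)) : g = p := by
  have hc : Tendsto (fun t : ℝ => y + t • (g - p)) (𝓝[>] 0) (𝓝 y) := by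
    have : Continuous (fun t : ℝ => y + t • (g - p)) := by fun_prop
    have h := this.tendsto 0
    simp only [zero_smul, add_zero] at h
    exact h.mono_left nhdsWithin_le_nhds
  have e1 := hc.eventually hK
  have e2 : ∀ᶠ t : ℝ in 𝓝[>] 0, t < 1 / (2 * Λ) :=
    nhdsWithin_le_nhds (gt_mem_nhds (by positivity))
  obtain ⟨t, ht, ht2, ht0⟩ := (e1.and (e2.and self_mem_nhdsWithin)).exists
  have ht0 : 0 < t := ht0
  have a1 := h1 _ ht
  have a2 := h2 _ ht
  rw [add_sub_cancel_left] at a1 a2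
  have : inner ℝ g (t • (g - p)) - inner ℝ p (t • (g - p)) = t * ‖g - p‖ ^ 2 := by
    rw [← inner_sub_left, inner_smul_right, real_inner_self_eq_norm_sq]
  rw [norm_smul, Real.norm_of_nonneg ht0.le, mul_pow] at a1
  have h3 : t * ‖g - p‖ ^ 2 ≤ Λ * (t ^ 2 * ‖g - p‖ ^ 2) := by linarith
  rw [lt_div_iff₀ (by positivity)] at ht2
  have h4 : ‖g - p‖ ^ 2 * t ≤ ‖g - p‖ ^ 2 * (t * (1 / 2)) := by
    nlinarith [mul_nonneg ht0.le (sq_nonneg ‖g - p‖)]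
  have h5 : ‖g - p‖ ^ 2 * t ≤ 0 := by linarith
  have h6 : ‖g - p‖ ^ 2 ≤ 0 := by
    by_contra hh; push Not at hh; nlinarith [mul_pos hh ht0]
  have h7 : ‖g - p‖ = 0 := by nlinarith [norm_nonneg (g - p), sq_nonneg ‖g-p‖, pow_eq_zero_iff (two_ne_zero) |>.1 (le_antisymm h6 (sq_nonneg _))]
  exact sub_eq_zero.1 (norm_eq_zero.1 h7)
end B

section C
variable {E : Type*} [NormedAddCommGroup E] [InnerProductSpace ℝ E]

theorem w_cont (u : E → ℝ) (a : E → E) (x0 : E) (r L : ℝ) (hr : 0 < r) (hL : 0 < L)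
    (haK : ∀ y, a y ∈ Metric.closedBall x0 r)
    (h : ∀ y, ∀ a' ∈ Metric.closedBall x0 r,
      u a' - L / 2 * ‖y - a'‖ ^ 2 ≤ u (a y) - L / 2 * ‖y - a y‖ ^ 2) :
    ContinuousOn (fun y => u (a y) - L / 2 * ‖y - a y‖ ^ 2) (Metric.closedBall x0 r) := by
  have : LipschitzOnWith (Real.toNNReal (3 * L * r)) (fun y => u (a y) - L / 2 * ‖y - a y‖ ^ 2)
      (Metric.closedBall x0 r) := by
    apply LipschitzOnWith.of_le_add_mul
    intro y hy z hz
    rw [Real.coe_toNNReal _ (by positivity)]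
    have h1 := lower_par u a _ L haK h y z
    have hyz : ∀ z ∈ Metric.closedBall x0 r, ‖z - y‖ ≤ 2 * r := by
      intro z hz
      have e : z - y = (z - x0) - (y - x0) := by abel
      rw [Metric.mem_closedBall, dist_eq_norm] at hy hz
      rw [e]; refine (norm_sub_le _ _).trans ?_; linarith
    have h2 := abs_real_inner_le_norm (L • (a y - y)) (z - y)
    rw [norm_smul, Real.norm_of_nonneg hL.le] at h2
    have h3 := hyz _ (haK y)
    have h4 := hyz z hz
    have h5 : L * ‖a y - y‖ * ‖z - y‖ ≤ L * (2 * r) * ‖z - y‖ := by gcongr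
    have h6 : L / 2 * ‖z - y‖ ^ 2 ≤ L / 2 * (2 * r) * ‖z - y‖ := by
      rw [sq, ← mul_assoc]; gcongr
    rw [dist_eq_norm, norm_sub_rev y z]
    have := (abs_le.1 h2).1
    linarith
  exact this.continuousOn

/-- transfer of the expansion from the sup-convolution to the function -/
theorem transfer (u : E → ℝ) (a : E → E) (K : Set E) (L : ℝ)
    (h : ∀ y, ∀ a' ∈ K, u a' - L / 2 * ‖y - a'‖ ^ 2 ≤ u (a y) - L / 2 * ‖y - a y‖ ^ 2)
    (y p : E) (D : E →L[ℝ] E) (hK : K ∈ 𝓝 (a y)) (κ : ℝ)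
    (hex : ∃ ρ > 0, ∀ x : E, ‖x‖ < ρ →
      |(u (a (y + x)) - L / 2 * ‖(y + x) - a (y + x)‖ ^ 2) - (u (a y) - L / 2 * ‖y - a y‖ ^ 2)
        - inner ℝ p x - inner ℝ (D x) x / 2| ≤ κ * ‖x‖ ^ 2) :
    ∀ᶠ z in 𝓝 (a y), u z ≤ u (a y) + inner ℝ p (z - a y) + inner ℝ (D (z - a y)) (z - a y) / 2
      + κ * ‖z - a y‖ ^ 2 := by
  obtain ⟨ρ, hρ, H⟩ := hex
  filter_upwards [hK, Metric.ball_mem_nhds (a y) hρ] with z hz hzb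
  rw [Metric.mem_ball, dist_eq_norm] at hzb
  have h1 := (abs_le.1 (H _ hzb)).2
  have h2 := h (y + (z - a y)) z hz
  have e : y + (z - a y) - z = y - a y := by abel
  rw [e] at h2
  linarith

theorem core [FiniteDimensional ℝ E] [MeasurableSpace E] [BorelSpace E]
    (x0 : E) (r : ℝ) (hr : 0 < r) (u v : E → ℝ)
    (hu : UpperSemicontinuousOn u (Metric.closedBall x0 r))
    (hv : UpperSemicontinuousOn v (Metric.closedBall x0 r))
    (c : ℝ) (q : E) (H : E →L[ℝ] E) (hH : ∀ x y, inner ℝ (H x) y = inner ℝ (H y) x)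
    (η : ℝ) (hη : 0 < η)
    (hle : ∀ z ∈ Metric.closedBall x0 r, u z + v z ≤ c + inner ℝ q (z - x0)
      + inner ℝ (H (z - x0)) (z - x0) / 2 - η * ‖z - x0‖ ^ 2)
    (heq : u x0 + v x0 = c) (δ : ℝ) (hδ : 0 < δ) :
    ∃ (a b p1 p2 : E) (D1 D2 : E →L[ℝ] E), a ∈ Metric.ball x0 r ∧ b ∈ Metric.ball x0 r ∧
      ‖p1 + p2 - q‖ < δ ∧ c - δ < u a + v b ∧
      (∀ x, inner ℝ (D1 x) x + inner ℝ (D2 x) x ≤ inner ℝ (H x) x) ∧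
      (∀ κ > 0, ∀ᶠ z in 𝓝 a, u z ≤ u a + inner ℝ p1 (z - a) + inner ℝ (D1 (z - a)) (z - a) / 2
        + κ * ‖z - a‖ ^ 2) ∧
      (∀ κ > 0, ∀ᶠ z in 𝓝 b, v z ≤ v b + inner ℝ p2 (z - b) + inner ℝ (D2 (z - b)) (z - b) / 2
        + κ * ‖z - b‖ ^ 2) := by
  set K := Metric.closedBall x0 r with hKdef
  have hK : IsCompact K := isCompact_closedBall x0 r
  have hx0K : x0 ∈ K := by simp [hKdef, hr.le]
  set Q : E → ℝ := fun y => c + inner ℝ q (y - x0) + inner ℝ (H (y - x0)) (y - x0) / 2 with hQ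
  have hQc : Continuous Q := by fun_prop
  have hQx0 : Q x0 = c := by simp [hQ]
  set DQ : E → E := fun y => q + H (y - x0) with hDQ
  have hQT : ∀ y z, Q z = Q y + inner ℝ (DQ y) (z - y) + inner ℝ (H (z - y)) (z - y) / 2 := by
    intro y z
    have e : z - x0 = (y - x0) + (z - y) := by abel
    simp only [hQ, hDQ]
    rw [e, map_add]
    simp only [inner_add_left, inner_add_right]
    rw [hH (z - y) (y - x0)]
    ring
  have hHb : ∀ x, |inner ℝ (H x) x| ≤ ‖H‖ * ‖x‖ ^ 2 := by
    intro x
    refine (abs_real_inner_le_norm _ _).trans ?_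
    have := H.le_opNorm x
    nlinarith [norm_nonneg x]
  -- small radius
  obtain ⟨d, hd0, hdr, hd1, hdδ⟩ : ∃ d > 0, d ≤ r / 4 ∧ d ≤ 1 ∧ (‖q‖ + ‖H‖ + 2) * d < δ := by
    refine ⟨min (r / 4) (min 1 (δ / (2 * (‖q‖ + ‖H‖ + 2)))), by positivity, min_le_left _ _,
      (min_le_right _ _).trans (min_le_left _ _), ?_⟩
    have h1 : min (r / 4) (min 1 (δ / (2 * (‖q‖ + ‖H‖ + 2)))) ≤ δ / (2 * (‖q‖ + ‖H‖ + 2)) :=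
      (min_le_right _ _).trans (min_le_right _ _)
    calc _ ≤ (‖q‖ + ‖H‖ + 2) * (δ / (2 * (‖q‖ + ‖H‖ + 2))) := by gcongr
      _ = δ / 2 := by field_simp
      _ < δ := by linarith
  obtain ⟨L, hL, τ0, hτ0, hloc⟩ := loc x0 r hr u v Q hu hv hQc (by
    intro z hz hne
    have h1 := hle z hz
    have h2 : 0 < η * ‖z - x0‖ ^ 2 := by
      have := norm_pos_iff.2 (sub_ne_zero.2 hne); positivity
    simp only [hQ]; linarith) d hd0
  set τ := min τ0 d with hτ
  have hτpos : 0 < τ := lt_min hτ0 hd0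
  obtain ⟨a, haK, ha⟩ := supconv K hK ⟨x0, hx0K⟩ u hu L
  obtain ⟨b, hbK, hb⟩ := supconv K hK ⟨x0, hx0K⟩ v hv L
  have low1 := lower_par u a K L haK ha
  have low2 := lower_par v b K L hbK hb
  have cont1 := w_cont u a x0 r L hr hL haK ha
  have cont2 := w_cont v b x0 r L hr hL hbK hb
  have tr1 := transfer u a K L ha
  have tr2 := transfer v b K L hb
  have w1x0 := ha x0 x0 hx0K
  have w2x0 := hb x0 x0 hx0K
  set w1 : E → ℝ := fun y => u (a y) - L / 2 * ‖y - a y‖ ^ 2 with hw1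
  set w2 : E → ℝ := fun y => v (b y) - L / 2 * ‖y - b y‖ ^ 2 with hw2
  set P1 : E → E := fun y => L • (a y - y) with hP1
  set P2 : E → E := fun y => L • (b y - y) with hP2
  have low1 : ∀ y z, w1 y + inner ℝ (P1 y) (z - y) - L / 2 * ‖z - y‖ ^ 2 ≤ w1 z := low1
  have low2 : ∀ y z, w2 y + inner ℝ (P2 y) (z - y) - L / 2 * ‖z - y‖ ^ 2 ≤ w2 z := low2
  set f : E → ℝ := fun y => w1 y + w2 y - Q y with hf
  set g : E → E := fun y => P1 y + P2 y - DQ y with hg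
  have hfx0 : 0 ≤ f x0 := by
    simp only [hf, hQx0, hw1, hw2]
    simp only [sub_self, norm_zero] at w1x0 w2x0
    linarith
  have hginner : ∀ y x, inner ℝ (g y) x
      = inner ℝ (P1 y) x + inner ℝ (P2 y) x - inner ℝ (DQ y) x := by
    intro y x; simp only [hg, inner_add_left, inner_sub_left]
  set S : Set E := {y | ‖y - x0‖ < d ∧ ‖g y‖ < τ ∧ ‖a y - x0‖ < d ∧ ‖b y - x0‖ < d ∧
    0 ≤ f y - inner ℝ (g y) (y - x0) ∧ ∀ z ∈ K, f z ≤ f y + inner ℝ (g y) (z - y)} with hS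
  have hnhds : ∀ y, ‖y - x0‖ < d → K ∈ 𝓝 y := by
    intro y hy
    apply Metric.closedBall_mem_nhds_of_mem
    rw [Metric.mem_ball, dist_eq_norm]; linarith
  have surj : Metric.ball 0 τ ⊆ g '' S := by
    intro p hp
    rw [mem_ball_zero_iff] at hp
    have hc : ContinuousOn (fun y => f y - inner ℝ p (y - x0)) K := by
      have : Continuous fun y : E => inner ℝ p (y - x0) := by fun_prop
      exact ((cont1.add cont2).sub hQc.continuousOn).sub this.continuousOn
    obtain ⟨y, hyK, hmax⟩ := hK.exists_isMaxOn ⟨x0, hx0K⟩ hc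
    have hmax : ∀ z ∈ K, f z - inner ℝ p (z - x0) ≤ f y - inner ℝ p (y - x0) := fun z hz => hmax hz
    have h0 := hmax x0 hx0K
    simp only [sub_self, inner_zero_right, sub_zero] at h0
    obtain ⟨l1, l2, l3⟩ := hloc y hyK (a y) (haK y) (b y) (hbK y) p
      (hp.le.trans (min_le_left _ _)) (by
        have := hfx0.trans h0
        simp only [hf, hw1, hw2] at this
        linarith)
    have hup : ∀ z ∈ K, f z ≤ f y + inner ℝ p (z - y) := by
      intro z hz
      have := hmax z hz
      have e : inner ℝ p (z - x0) = inner ℝ p (z - y) + inner ℝ p (y - x0) := by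
        rw [← inner_add_right]; congr 1; abel
      linarith
    have hgp : g y = p := by
      apply grad_unique f K y (g y) p (L + ‖H‖) (by positivity) (hnhds y l1) _ hup
      intro z _
      have := low1 y z
      have := low2 y z
      have := hQT y z
      have := (abs_le.1 (hHb (z - y))).2
      have := mul_nonneg (norm_nonneg H) (sq_nonneg ‖z - y‖)
      rw [hginner]
      simp only [hf]
      linarith
    refine ⟨y, ⟨l1, by rw [hgp]; exact hp, l2, l3, ?_, by rw [hgp]; exact hup⟩, hgp⟩
    rw [hgp]; linarith
  -- two sided paraboloids
  have par1 : ∀ y ∈ S, ∀ z ∈ K, |w1 z - w1 y - inner ℝ (P1 y) (z - y)|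
      ≤ (L + ‖H‖) * ‖z - y‖ ^ 2 := by
    intro y hy z hz
    have h1 := hy.2.2.2.2.2 z hz
    rw [hginner] at h1
    simp only [hf] at h1
    have := low1 y z
    have := low2 y z
    have := hQT y z
    have := (abs_le.1 (hHb (z - y))).2
    have := mul_nonneg (norm_nonneg H) (sq_nonneg ‖z - y‖)
    have := mul_nonneg hL.le (sq_nonneg ‖z - y‖)
    rw [abs_le]; constructor <;> linarith
  have par2 : ∀ y ∈ S, ∀ z ∈ K, |w2 z - w2 y - inner ℝ (P2 y) (z - y)|
      ≤ (L + ‖H‖) * ‖z - y‖ ^ 2 := by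
    intro y hy z hz
    have h1 := hy.2.2.2.2.2 z hz
    rw [hginner] at h1
    simp only [hf] at h1
    have := low1 y z
    have := low2 y z
    have := hQT y z
    have := (abs_le.1 (hHb (z - y))).2
    have := mul_nonneg (norm_nonneg H) (sq_nonneg ‖z - y‖)
    have := mul_nonneg hL.le (sq_nonneg ‖z - y‖)
    rw [abs_le]; constructor <;> linarith
  have hSK : ∀ y ∈ S, ∀ y' ∈ S, ∀ e : E, ‖e‖ ≤ ‖y - y'‖ → y' + e ∈ K := by
    intro y hy y' hy' e he
    have h1 := hy.1
    have h2 := hy'.1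
    have h3 : ‖y - y'‖ ≤ 2 * d := by
      have : y - y' = (y - x0) - (y' - x0) := by abel
      rw [this]; refine (norm_sub_le _ _).trans ?_; linarith
    rw [hKdef, Metric.mem_closedBall, dist_eq_norm]
    have : y' + e - x0 = (y' - x0) + e := by abel
    rw [this]; refine (norm_add_le _ _).trans ?_; linarith
  have hC : 0 ≤ L + ‖H‖ := by positivity
  have lip1 := par_lip w1 P1 S K _ hC par1 hSK
  have lip2 := par_lip w2 P2 S K _ hC par2 hSK
  have lipQ : LipschitzWith ‖H‖₊ DQ := by
    apply LipschitzWith.of_dist_le_mul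
    intro x y
    rw [dist_eq_norm, dist_eq_norm]
    have : DQ x - DQ y = H (x - y) := by
      simp only [hDQ, map_sub]; abel
    rw [this]; exact H.le_opNorm _
  have lipg := (lip1.add lip2).sub (lipQ.lipschitzOnWith (s := S))
  have hae1 := lip1.ae_differentiableWithinAt_of_mem
    (μ := MeasureTheory.Measure.hausdorffMeasure (X := E) (Module.finrank ℝ E))
  have hae2 := lip2.ae_differentiableWithinAt_of_mem
    (μ := MeasureTheory.Measure.hausdorffMeasure (X := E) (Module.finrank ℝ E))
  have hae3 := (Metric.lipschitz_infDist_pt S).ae_differentiableAt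
    (μ := MeasureTheory.Measure.hausdorffMeasure (X := E) (Module.finrank ℝ E))
  obtain ⟨y, hyS, hy1, hy2, hy3⟩ := good_point g S _ lipg τ hτpos surj
    (fun y => (y ∈ S → DifferentiableWithinAt ℝ P1 S y) ∧ (y ∈ S → DifferentiableWithinAt ℝ P2 S y)
      ∧ DifferentiableAt ℝ (fun z => Metric.infDist z S) y)
    (by filter_upwards [hae1, hae2, hae3] with y h1 h2 h3 using ⟨h1, h2, h3⟩)
  have hd1' := (hy1 hyS).hasFDerivWithinAt
  have hd2' := (hy2 hyS).hasFDerivWithinAt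
  set D1 := fderivWithin ℝ P1 S y
  set D2 := fderivWithin ℝ P2 S y
  have hKy := hnhds y hyS.1
  have ex1 := expansion w1 P1 S K _ hC par1 y hyS hKy D1 hd1' hy3
  have ex2 := expansion w2 P2 S K _ hC par2 y hyS hKy D2 hd2' hy3
  obtain ⟨s1, s2, s3, s4, s5, s6⟩ := hyS
  have hτd : τ ≤ d := min_le_right _ _
  refine ⟨a y, b y, P1 y, P2 y, D1, D2, ?_, ?_, ?_, ?_, ?_, ?_, ?_⟩
  · rw [Metric.mem_ball, dist_eq_norm]; linarith
  · rw [Metric.mem_ball, dist_eq_norm]; linarith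
  · have e : P1 y + P2 y - q = g y + H (y - x0) := by simp only [hg, hDQ]; abel
    rw [e]
    refine (norm_add_le _ _).trans_lt ?_
    have h1 : ‖H (y - x0)‖ ≤ ‖H‖ * d := (H.le_opNorm _).trans (by gcongr)
    nlinarith [mul_nonneg (norm_nonneg q) hd0.le]
  · have h1 := (abs_le.1 (abs_real_inner_le_norm (g y) (y - x0))).1
    have h2 : ‖g y‖ * ‖y - x0‖ ≤ d * 1 := by
      gcongr
      · linarith
      · linarith
    have h3 := (abs_le.1 (abs_real_inner_le_norm q (y - x0))).1
    have h4 : ‖q‖ * ‖y - x0‖ ≤ ‖q‖ * d := by gcongr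
    have h5 := (abs_le.1 (hHb (y - x0))).1
    have h6 : ‖H‖ * ‖y - x0‖ ^ 2 ≤ ‖H‖ * d := by
      gcongr
      nlinarith [norm_nonneg (y - x0)]
    have h7 : 0 ≤ L / 2 * ‖y - a y‖ ^ 2 := by positivity
    have h8 : 0 ≤ L / 2 * ‖y - b y‖ ^ 2 := by positivity
    have h9 := mul_nonneg (norm_nonneg H) hd0.le
    simp only [hf, hw1, hw2, hQ] at s5
    linarith
  · intro x
    by_contra hcon
    push Not at hcon
    have hx : x ≠ 0 := by rintro rfl; simp at hcon
    have hxn : 0 < ‖x‖ := norm_pos_iff.2 hx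
    set G := inner ℝ (D1 x) x + inner ℝ (D2 x) x - inner ℝ (H x) x with hG
    have hGpos : 0 < G := by linarith
    have hκ : 0 < G / (8 * ‖x‖ ^ 2) := by positivity
    obtain ⟨ρ1, hρ1, H1⟩ := ex1 _ hκ
    obtain ⟨ρ2, hρ2, H2⟩ := ex2 _ hκ
    have hc : Tendsto (fun t : ℝ => t • x) (𝓝[>] 0) (𝓝 0) := by
      have : Continuous (fun t : ℝ => t • x) := by fun_prop
      have h := this.tendsto 0
      simp only [zero_smul] at h
      exact h.mono_left nhdsWithin_le_nhds
    have e1 := hc.eventually (Metric.ball_mem_nhds 0 hρ1)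
    have e2 := hc.eventually (Metric.ball_mem_nhds 0 hρ2)
    have hc3 : Tendsto (fun t : ℝ => y + t • x) (𝓝[>] 0) (𝓝 y) := by
      simpa using hc.const_add y
    have e3 := hc3.eventually hKy
    obtain ⟨t, t1, t2, t3, t0⟩ := (e1.and (e2.and (e3.and self_mem_nhdsWithin))).exists
    have t0 : 0 < t := t0
    rw [dist_zero_right] at t1 t2
    have a1 := (abs_le.1 (H1 _ t1)).1
    have a2 := (abs_le.1 (H2 _ t2)).1
    have a3 := s6 _ t3
    have a4 := hQT y (y + t • x)
    rw [add_sub_cancel_left] at a3 a4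
    rw [hginner] at a3
    simp only [hf] at a3
    have en : G / (8 * ‖x‖ ^ 2) * ‖t • x‖ ^ 2 = t ^ 2 * G / 8 := by
      rw [norm_smul, Real.norm_of_nonneg t0.le]; field_simp
    have q1 : ∀ D : E →L[ℝ] E, inner ℝ (D (t • x)) (t • x) = t ^ 2 * inner ℝ (D x) x := by
      intro D; rw [map_smul, inner_smul_left, inner_smul_right]; simp; ring
    rw [en, q1] at a1 a2
    rw [q1] at a4
    have : 0 < t ^ 2 * G := by positivity
    have eG : t ^ 2 * G = t ^ 2 * inner ℝ (D1 x) x + t ^ 2 * inner ℝ (D2 x) x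
      - t ^ 2 * inner ℝ (H x) x := by rw [hG]; ring
    linarith
  · intro κ hκ
    exact tr1 y (P1 y) D1 (hnhds _ s3) κ (ex1 κ hκ)
  · intro κ hκ
    exact tr2 y (P2 y) D2 (hnhds _ s4) κ (ex2 κ hκ)
end C


theorem trunc {E : Type*} [TopologicalSpace E] (K : Set E) (hK : IsCompact K) (hne : K.Nonempty)
    (u : E → EReal) (hu : UpperSemicontinuousOn u K) (htop : ∀ x ∈ K, u x < ⊤) :
    ∃ Cu : ℝ, 0 ≤ Cu ∧ ∀ m : ℝ, 0 ≤ m → ∃ ut : E → ℝ, UpperSemicontinuousOn ut K ∧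
      ∀ z ∈ K, u z ≤ ut z ∧ ut z ≤ Cu ∧ -m ≤ ut z ∧ (-m < ut z → u z = ut z) := by
  obtain ⟨z0, hz0, hmax⟩ := hu.exists_isMaxOn hne hK
  obtain ⟨Cu, hC0, hCu⟩ : ∃ Cu : ℝ, 0 ≤ Cu ∧ ∀ z ∈ K, u z ≤ Cu := by
    refine ⟨max (u z0).toReal 0, le_max_right _ _, fun z hz => (hmax hz).trans ?_⟩
    refine (EReal.le_coe_toReal (htop z0 hz0).ne).trans ?_
    exact EReal.coe_le_coe_iff.2 (le_max_left _ _)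
  refine ⟨Cu, hC0, fun m hm => ?_⟩
  have key : ∀ z ∈ K, (((max (u z) ((-m : ℝ) : EReal)).toReal : ℝ) : EReal)
      = max (u z) ((-m : ℝ) : EReal) := by
    intro z hz
    apply EReal.coe_toReal
    · exact (max_lt (htop z hz) (EReal.coe_lt_top _)).ne
    · exact ((EReal.bot_lt_coe _).trans_le (le_max_right _ _)).ne'
  refine ⟨fun z => (max (u z) ((-m : ℝ) : EReal)).toReal, ?_, fun z hz => ⟨?_, ?_, ?_, ?_⟩⟩
  · intro x hx y hy
    have hy' : max (u x) ((-m : ℝ) : EReal) < (y : EReal) := by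
      rw [← key x hx]; exact EReal.coe_lt_coe_iff.2 hy
    rw [max_lt_iff] at hy'
    filter_upwards [hu x hx _ hy'.1, self_mem_nhdsWithin] with z h1 hz
    rw [← EReal.coe_lt_coe_iff, key z hz]
    exact max_lt h1 hy'.2
  · rw [key z hz]; exact le_max_left _ _
  · rw [← EReal.coe_le_coe_iff, key z hz]
    exact max_le (hCu z hz) (EReal.coe_le_coe_iff.2 (by linarith))
  · rw [← EReal.coe_le_coe_iff, key z hz]; exact le_max_right _ _
  · intro h
    rw [← EReal.coe_lt_coe_iff, key z hz] at h
    rw [key z hz]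
    rcases lt_max_iff.1 h with h | h
    · exact (max_eq_left h.le).symm
    · exact absurd h (lt_irrefl _)

/-- matrix of a symmetric bilinear form -/
def matB {n : ℕ} (B : En n →L[ℝ] En n →L[ℝ] ℝ) (hB : ∀ x y, B x y = B y x) : SymMat n :=
  ⟨Matrix.of fun i j => B (EuclideanSpace.single i (1 : ℝ)) (EuclideanSpace.single j (1 : ℝ)), by
    rw [selfAdjoint.mem_iff]
    ext i j
    simp [Matrix.star_apply, hB]⟩

theorem matB_form {n : ℕ} (B : En n →L[ℝ] En n →L[ℝ] ℝ) (hB : ∀ x y, B x y = B y x)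
    (x : Fin n → ℝ) :
    x ⬝ᵥ ((matB B hB : Matrix (Fin n) (Fin n) ℝ).mulVec x)
      = B (WithLp.toLp 2 x) (WithLp.toLp 2 x) := by
  have hx : (WithLp.toLp 2 x : En n) = ∑ i, x i • EuclideanSpace.single i (1 : ℝ) := by
    ext j
    simp [Pi.single_apply]
  rw [hx]
  simp only [map_sum, map_smul, sum_apply, smul_apply,
    dotProduct, Matrix.mulVec, matB, Matrix.of_apply, smul_eq_mul, Finset.mul_sum]
  rw [Finset.sum_comm]
  refine Finset.sum_congr rfl fun i _ => Finset.sum_congr rfl fun j _ => ?_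
  ring

theorem quad_deriv {E : Type*} [NormedAddCommGroup E] [InnerProductSpace ℝ E] (c : ℝ) (p a : E)
    (B : E →L[ℝ] E →L[ℝ] ℝ) (hB : ∀ x y, B x y = B y x) (z : E) :
    HasFDerivAt (fun z => c + inner ℝ p (z - a) + B (z - a) (z - a) / 2)
      (innerSL ℝ p + B (z - a)) z := by
  have h0 : HasFDerivAt (fun z : E => z - a) (ContinuousLinearMap.id ℝ E) z :=
    (hasFDerivAt_id z).sub_const a
  have h1 : HasFDerivAt (fun z => innerSL ℝ p (z - a)) (innerSL ℝ p) z :=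
    (innerSL ℝ p).hasFDerivAt.comp z h0
  have h2 : HasFDerivAt (fun z => B (z - a)) B z := B.hasFDerivAt.comp z h0
  have h3 := h2.clm_apply h0
  have h4 := ((h1.const_add c).add (h3.mul_const (1 / 2 : ℝ)))
  refine (h4.congr_fderiv ?_).congr_of_eventuallyEq ?_
  · ext x
    have := hB x (z - a)
    simp only [map_sub, sub_apply] at this
    simp
    linarith
  · refine Filter.Eventually.of_forall fun z => ?_
    simp [div_eq_mul_inv]

theorem quad_jet {n : ℕ} (X : Set (En n)) (hX : IsOpen X) (F : Set (Jet n)) (u : En n → EReal)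
    (huF : CCSubharmonicOn F u X) (a : En n) (ha : a ∈ X) (c : ℝ) (p : En n)
    (B : En n →L[ℝ] En n →L[ℝ] ℝ) (hB : ∀ x y, B x y = B y x) (hc : u a = c)
    (hle : ∀ᶠ z in 𝓝 a, u z ≤ ((c + inner ℝ p (z - a) + B (z - a) (z - a) / 2 : ℝ) : EReal)) :
    ((c, p, matB B hB) : Jet n) ∈ F := by
  obtain ⟨V, hV, hVo, haV⟩ := mem_nhds_iff.1 (Filter.inter_mem hle (hX.mem_nhds ha))
  apply huF a ha
  have hd := quad_deriv c p a B hB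
  have hfd : fderiv ℝ (fun z => c + inner ℝ p (z - a) + B (z - a) (z - a) / 2)
      = fun z => innerSL ℝ p + B (z - a) := funext fun z => (hd z).fderiv
  refine ⟨fun z => c + inner ℝ p (z - a) + B (z - a) (z - a) / 2, V, hVo, haV,
    fun z hz => (hV hz).2, ?_, fun z hz => (hV hz).1, by simp [hc], by simp, ?_, ?_⟩
  · apply ContDiff.contDiffOn
    have h1 : ContDiff ℝ 2 fun z : En n => z - a := by fun_prop
    have h2 : ContDiff ℝ 2 fun z : En n => B (z - a) := B.contDiff.comp h1
    have h3 := h2.clm_apply h1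
    exact (contDiff_const.add (contDiff_const.inner ℝ h1)).add (h3.div_const 2)
  · symm
    apply HasGradientAt.gradient
    rw [hasGradientAt_iff_hasFDerivAt]
    refine (hd a).congr_fderiv ?_
    ext x; simp
  · ext i j
    simp only [hess, Matrix.of_apply, matB]
    rw [iteratedFDeriv_two_apply, hfd]
    have : HasFDerivAt (fun z => innerSL ℝ p + B (z - a)) B a := by
      have h0 : HasFDerivAt (fun z : En n => z - a) (ContinuousLinearMap.id ℝ (En n)) a :=
        (hasFDerivAt_id a).sub_const a
      have := (B.hasFDerivAt.comp a h0).const_add (innerSL ℝ p)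
      exact this
    rw [this.fderiv]
    simp

theorem taylor2 {E : Type*} [NormedAddCommGroup E] [InnerProductSpace ℝ E] [CompleteSpace E]
    (φ : E → ℝ)
    (V : Set E) (hV : IsOpen V) (x0 : E) (hx0 : x0 ∈ V) (hφ : ContDiffOn ℝ 2 φ V) :
    (∀ x y, fderiv ℝ (fderiv ℝ φ) x0 x y = fderiv ℝ (fderiv ℝ φ) x0 y x) ∧
    ∀ η > 0, ∀ᶠ z in 𝓝 x0, φ z ≤ φ x0 + inner ℝ (gradient φ x0) (z - x0)
      + fderiv ℝ (fderiv ℝ φ) x0 (z - x0) (z - x0) / 2 + η * ‖z - x0‖ ^ 2 := by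
  have hat : ContDiffAt ℝ 2 φ x0 := hφ.contDiffAt (hV.mem_nhds hx0)
  have hsymm : ∀ x y, fderiv ℝ (fderiv ℝ φ) x0 x y = fderiv ℝ (fderiv ℝ φ) x0 y x :=
    fun x y => (hat.isSymmSndFDerivAt (by simp)) x y
  refine ⟨hsymm, fun η hη => ?_⟩
  set B := fderiv ℝ (fderiv ℝ φ) x0 with hB
  set p := gradient φ x0 with hp
  have hpe : innerSL ℝ p = fderiv ℝ φ x0 := by
    ext x
    simp [hp, gradient]
  obtain ⟨r, hr, hrV⟩ := Metric.isOpen_iff.1 hV x0 hx0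
  have hd : DifferentiableAt ℝ (fderiv ℝ φ) x0 :=
    (hat.fderiv_right (m := 1) (by norm_num)).differentiableAt (by norm_num)
  have hlo := hd.hasFDerivAt.isLittleO
  have hq := quad_deriv (φ x0) p x0 B hsymm
  have key := (convex_ball x0 r).isLittleO_pow_succ (n := 1) (Metric.mem_ball_self hr)
    (f := fun z => φ z - (φ x0 + inner ℝ p (z - x0) + B (z - x0) (z - x0) / 2))
    (f' := fun z => fderiv ℝ φ z - (innerSL ℝ p + B (z - x0)))
    (by
      intro z hz
      have h1 : DifferentiableAt ℝ φ z :=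
        (hφ.contDiffAt (hV.mem_nhds (hrV hz))).differentiableAt (by norm_num)
      exact (h1.hasFDerivAt.sub (hq z)).hasFDerivWithinAt)
    (by
      rw [Metric.isOpen_ball.nhdsWithin_eq (Metric.mem_ball_self hr)]
      simp only [pow_one]
      rw [Asymptotics.isLittleO_norm_right]
      refine hlo.congr_left fun z => ?_
      rw [hpe]; abel)
  rw [Metric.isOpen_ball.nhdsWithin_eq (Metric.mem_ball_self hr)] at key
  filter_upwards [key.def hη] with z hz
  simp only [sub_self, inner_zero_right, map_zero, add_zero, zero_div, sub_zero] at hz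
  rw [Real.norm_eq_abs, Real.norm_of_nonneg (by positivity)] at hz
  have := (abs_le.1 hz).2
  rw [show (1 + 1 : ℕ) = 2 from rfl] at this
  linarith

theorem usc_add {n : ℕ} (X : Set (En n)) (u v : En n → EReal)
    (hu : USCOn u X) (hv : USCOn v X) : USCOn (fun x => u x + v x) X := by
  refine ⟨?_, fun x hx => EReal.add_lt_top (hu.2 x hx).ne (hv.2 x hx).ne⟩
  apply hu.1.add' hv.1
  intro x hx
  exact EReal.continuousAt_add (Or.inl (hu.2 x hx).ne) (Or.inr (hv.2 x hx).ne)

theorem add_interior {n : ℕ} (F M : Set (Jet n)) (J : Jet n) (h : ∀ m ∈ M, J + m ∈ F)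
    (m : Jet n) (hm : m ∈ interior M) : J + m ∈ interior F := by
  have h1 : IsOpen ((fun x => J + x) '' interior M) :=
    (isOpenMap_add_left J) _ isOpen_interior
  refine interior_maximal ?_ h1 ⟨m, hm, rfl⟩
  rintro _ ⟨x, hx, rfl⟩
  exact h x (interior_subset hx)

/-- the inner product as a bilinear map -/
def inB (n : ℕ) : En n →L[ℝ] En n →L[ℝ] ℝ :=
  LinearMap.toContinuousLinearMap
    { toFun := fun x => innerSL ℝ x
      map_add' := fun x y => by ext z; simp [inner_add_left]
      map_smul' := fun c x => by ext z; simp [inner_smul_left] }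

theorem inB_apply {n : ℕ} (x y : En n) : inB n x y = inner ℝ x y := by
  simp [inB]

/-- the symmetrized bilinear form of an operator plus `2κ` times the inner product -/
def symB {n : ℕ} (D : En n →L[ℝ] En n) (κ : ℝ) : En n →L[ℝ] En n →L[ℝ] ℝ :=
  (1 / 2 : ℝ) • ((inB n).comp D + ((inB n).comp D).flip) + (2 * κ) • inB n

theorem symB_apply {n : ℕ} (D : En n →L[ℝ] En n) (κ : ℝ) (x y : En n) :
    symB D κ x y = (inner ℝ (D x) y + inner ℝ (D y) x) / 2 + 2 * κ * inner ℝ x y := by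
  simp only [symB, ContinuousLinearMap.add_apply, ContinuousLinearMap.smul_apply,
    ContinuousLinearMap.comp_apply, ContinuousLinearMap.flip_apply, inB_apply, smul_eq_mul]
  ring

/-- the operator representing a bilinear form -/
def opB {n : ℕ} (B : En n →L[ℝ] En n →L[ℝ] ℝ) : En n →L[ℝ] En n :=
  LinearMap.toContinuousLinearMap
    { toFun := fun x => (InnerProductSpace.toDual ℝ (En n)).symm (B x)
      map_add' := fun x y => by simp
      map_smul' := fun c x => by simp }

theorem opB_apply {n : ℕ} (B : En n →L[ℝ] En n →L[ℝ] ℝ) (x y : En n) :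
    inner ℝ (opB B x) y = B x y := by
  simp [opB]

theorem symB_symm {n : ℕ} (D : En n →L[ℝ] En n) (κ : ℝ) (x y : En n) :
    symB D κ x y = symB D κ y x := by
  rw [symB_apply, symB_apply, real_inner_comm x y]; ring

theorem quad_core {n : ℕ} (M : Set (Jet n)) (hM : IsMonotonicityConeSubequation M)
    (F : Set (Jet n)) (hFM : F + M ⊆ F)
    (X : Set (En n)) (hX : IsOpen X) (u v : En n → EReal)
    (hu : USCOn u X) (hv : USCOn v X)
    (huF : CCSubharmonicOn F u X) (hvF : CCSubharmonicOn (dualJ F) v X) :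
    CCSubharmonicOn (dualJ M) (fun x => u x + v x) X := by
  intro x0 hx0 J hJ
  obtain ⟨φ, V, hVo, hx0V, hVX, hφ, hle, heq, hJ1, hJ2, hJ3⟩ := hJ
  by_contra hJM
  have hJM : -J ∈ interior M := by
    simpa [dualJ] using hJM
  -- real values at x0
  have hsum : u x0 + v x0 = (φ x0 : EReal) := heq
  have hune : u x0 ≠ ⊥ := by
    intro h; rw [h, EReal.bot_add] at hsum; exact EReal.bot_ne_coe _ hsum
  have hvne : v x0 ≠ ⊥ := by
    intro h; rw [h, EReal.add_bot] at hsum; exact EReal.bot_ne_coe _ hsum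
  obtain ⟨u0, hu0⟩ : ∃ u0 : ℝ, u x0 = u0 :=
    ⟨_, (EReal.coe_toReal (hu.2 x0 hx0).ne hune).symm⟩
  obtain ⟨v0, hv0⟩ : ∃ v0 : ℝ, v x0 = v0 :=
    ⟨_, (EReal.coe_toReal (hv.2 x0 hx0).ne hvne).symm⟩
  have huv0 : u0 + v0 = φ x0 := by
    rw [hu0, hv0] at hsum; exact_mod_cast hsum
  obtain ⟨hBs, hT⟩ := taylor2 φ V hVo x0 hx0V hφ
  set B0 := fderiv ℝ (fderiv ℝ φ) x0 with hB0
  set q := gradient φ x0 with hq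
  set c := φ x0 with hc
  have hA : J.2.2 = matB B0 hBs := by
    apply Subtype.ext
    rw [hJ3]
    ext i j
    simp [hess, matB, iteratedFDeriv_two_apply, hB0]
  have hJe : J = (c, q, matB B0 hBs) := by
    rw [← hJ1, ← hJ2, ← hA]
  -- neighbourhood in interior M
  have hone : (1 : Matrix (Fin n) (Fin n) ℝ) ∈ selfAdjoint (Matrix (Fin n) (Fin n) ℝ) := by
    rw [selfAdjoint.mem_iff, star_one]
  set I1 : SymMat n := ⟨1, hone⟩ with hI1
  obtain ⟨δ, hδ, hδM⟩ : ∃ δ > 0, ∀ (s : ℝ) (p : En n) (t : ℝ), |s| ≤ δ → ‖p - q‖ < δ → |t| ≤ δ →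
      ((-c + s, -p, -(matB B0 hBs) - t • I1) : Jet n) ∈ interior M := by
    have hcont : Continuous (fun z : ℝ × En n × ℝ =>
        ((-c + z.1, -z.2.1, -(matB B0 hBs) - z.2.2 • I1) : Jet n)) := by
      refine (continuous_const.add continuous_fst).prodMk
        ((continuous_snd.fst.neg).prodMk ?_)
      refine Continuous.subtype_mk (p := fun A => A ∈ selfAdjoint (Matrix (Fin n) (Fin n) ℝ))
        (f := fun z : ℝ × En n × ℝ => -(matB B0 hBs : Matrix (Fin n) (Fin n) ℝ)
          - z.2.2 • (1 : Matrix (Fin n) (Fin n) ℝ)) ?_ _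
      exact continuous_const.sub (continuous_snd.snd.smul continuous_const)
    have hmem : (fun z : ℝ × En n × ℝ =>
        ((-c + z.1, -z.2.1, -(matB B0 hBs) - z.2.2 • I1) : Jet n)) ⁻¹' interior M
        ∈ 𝓝 ((0 : ℝ), q, (0 : ℝ)) := by
      apply hcont.continuousAt.preimage_mem_nhds
      apply isOpen_interior.mem_nhds
      have : -J = (-c, -q, -(matB B0 hBs)) := by rw [hJe]; rfl
      simpa [← this] using hJM
    obtain ⟨δ, hδ, h⟩ := Metric.mem_nhds_iff.1 hmem
    refine ⟨δ / 2, by positivity, fun s p t hs hp ht => ?_⟩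
    have : ((s, p, t) : ℝ × En n × ℝ) ∈ Metric.ball ((0 : ℝ), q, (0 : ℝ)) δ := by
      rw [Metric.mem_ball, Prod.dist_eq, Prod.dist_eq]
      simp only [max_lt_iff, Real.dist_eq, sub_zero]
      rw [dist_eq_norm]
      refine ⟨by linarith, by linarith, by linarith⟩
    exact h this
  set η := δ / 8 with hη
  have hηpos : 0 < η := by positivity
  -- the ball
  obtain ⟨r0, hr0, hball⟩ := Metric.mem_nhds_iff.1
    (Filter.inter_mem (hT η hηpos) (hVo.mem_nhds hx0V))
  set r := r0 / 2 with hr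
  have hrpos : 0 < r := by positivity
  set K := Metric.closedBall x0 r with hKdef
  have hKsub : K ⊆ Metric.ball x0 r0 := Metric.closedBall_subset_ball (by linarith)
  have hKV : K ⊆ V := fun z hz => (hball (hKsub hz)).2
  have hKX : K ⊆ X := hKV.trans hVX
  have hKT : ∀ z ∈ K, φ z ≤ c + inner ℝ q (z - x0) + B0 (z - x0) (z - x0) / 2
      + η * ‖z - x0‖ ^ 2 := fun z hz => (hball (hKsub hz)).1
  have hK : IsCompact K := isCompact_closedBall x0 r
  have hx0K : x0 ∈ K := by simp [hKdef, hrpos.le]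
  -- H
  set H : En n →L[ℝ] En n := opB (B0 + (4 * η) • inB n) with hH
  have hHa : ∀ x y, inner ℝ (H x) y = B0 x y + 4 * η * inner ℝ x y := by
    intro x y
    rw [hH, opB_apply]; simp [inB_apply]
  have hHs : ∀ x y, inner ℝ (H x) y = inner ℝ (H y) x := by
    intro x y; rw [hHa, hHa, hBs, real_inner_comm]
  -- truncation
  obtain ⟨Cu, hCu0, hCu⟩ := trunc K hK ⟨x0, hx0K⟩ u (hu.1.mono hKX) (fun x hx => hu.2 x (hKX hx))
  obtain ⟨Cv, hCv0, hCv⟩ := trunc K hK ⟨x0, hx0K⟩ v (hv.1.mono hKX) (fun x hx => hv.2 x (hKX hx))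
  set Q : En n → ℝ := fun z => c + inner ℝ q (z - x0) + inner ℝ (H (z - x0)) (z - x0) / 2
    - η * ‖z - x0‖ ^ 2 with hQ
  have hQc : Continuous Q := by fun_prop
  obtain ⟨zq, -, hzq⟩ := hK.exists_isMinOn ⟨x0, hx0K⟩ hQc.continuousOn
  have hzq : ∀ z ∈ K, Q zq ≤ Q z := fun z hz => hzq hz
  set m : ℝ := Cu + Cv + |Q zq| + |c| + |u0| + |v0| + δ + 1 with hm
  have hm0 : 0 ≤ m := by positivity
  have hb1 := neg_abs_le (Q zq)
  have hb2 := neg_abs_le c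
  have hb3 := neg_abs_le u0
  have hb4 := neg_abs_le v0
  have hb5 := abs_nonneg (Q zq)
  have hb6 := abs_nonneg c
  have hb7 := abs_nonneg u0
  have hb8 := abs_nonneg v0
  obtain ⟨ut, hutu, hut⟩ := hCu m hm0
  obtain ⟨vt, hvtu, hvt⟩ := hCv m hm0
  have hut0 : ut x0 = u0 := by
    have h := hut x0 hx0K
    have h1 : u0 ≤ ut x0 := by have := h.1; rw [hu0] at this; exact_mod_cast this
    have h2 := h.2.2.2 (by linarith)
    rw [hu0] at h2; exact_mod_cast h2.symm
  have hvt0 : vt x0 = v0 := by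
    have h := hvt x0 hx0K
    have h1 : v0 ≤ vt x0 := by have := h.1; rw [hv0] at this; exact_mod_cast this
    have h2 := h.2.2.2 (by linarith)
    rw [hv0] at h2; exact_mod_cast h2.symm
  have hmain : ∀ z ∈ K, ut z + vt z ≤ Q z := by
    intro z hz
    obtain ⟨a1, a2, a3, a4⟩ := hut z hz
    obtain ⟨b1, b2, b3, b4⟩ := hvt z hz
    have hqz := hzq z hz
    rcases a3.lt_or_eq with ha | ha
    · rcases b3.lt_or_eq with hb | hb
      · have h1 := hle z (hKV hz)
        simp only [a4 ha, b4 hb] at h1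
        have h2 : ut z + vt z ≤ φ z := by exact_mod_cast h1
        have h3 := hKT z hz
        simp only [hQ]
        rw [hHa, real_inner_self_eq_norm_sq]
        linarith
      · linarith
    · linarith
  obtain ⟨a, b, p1, p2, D1, D2, haB, hbB, hp, hval, hD, hex1, hex2⟩ :=
    core x0 r hrpos ut vt hutu hvtu c q H hHs η hηpos hmain (by rw [hut0, hvt0, huv0]) δ hδ
  have haK : a ∈ K := Metric.ball_subset_closedBall haB
  have hbK : b ∈ K := Metric.ball_subset_closedBall hbB
  have hau : u a = ut a := by
    have := (hvt b hbK).2.1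
    exact (hut a haK).2.2.2 (by linarith)
  have hbv : v b = vt b := by
    have := (hut a haK).2.1
    exact (hvt b hbK).2.2.2 (by linarith)
  have hKa : K ∈ 𝓝 a := Metric.closedBall_mem_nhds_of_mem haB
  have hKb : K ∈ 𝓝 b := Metric.closedBall_mem_nhds_of_mem hbB
  have J1 := quad_jet X hX F u huF a (hKX haK) (ut a) p1 (symB D1 η) (symB_symm D1 η) hau (by
    filter_upwards [hKa, hex1 η hηpos] with z hz h
    refine (hut z hz).1.trans (EReal.coe_le_coe_iff.2 ?_)
    rw [symB_apply, real_inner_self_eq_norm_sq]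
    linarith)
  have J2 := quad_jet X hX (dualJ F) v hvF b (hKX hbK) (vt b) p2 (symB D2 η) (symB_symm D2 η) hbv (by
    filter_upwards [hKb, hex2 η hηpos] with z hz h
    refine (hvt z hz).1.trans (EReal.coe_le_coe_iff.2 ?_)
    rw [symB_apply, real_inner_self_eq_norm_sq]
    linarith)
  set A1 := matB (symB D1 η) (symB_symm D1 η) with hA1
  set A2 := matB (symB D2 η) (symB_symm D2 η) with hA2
  have hm1 := hδM δ (p1 + p2) δ (abs_of_pos hδ).le hp (abs_of_pos hδ).le
  set P : SymMat n := matB B0 hBs + δ • I1 - A1 - A2 with hP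
  have hPSD : PSD P := by
    refine Matrix.PosSemidef.of_dotProduct_mulVec_nonneg ?_ ?_
    · exact P.2
    · intro x
      have e : (P : Matrix (Fin n) (Fin n) ℝ) = (matB B0 hBs : Matrix (Fin n) (Fin n) ℝ)
          + δ • (1 : Matrix (Fin n) (Fin n) ℝ) - (A1 : Matrix (Fin n) (Fin n) ℝ)
          - (A2 : Matrix (Fin n) (Fin n) ℝ) := rfl
      rw [e, star_trivial, Matrix.sub_mulVec, Matrix.sub_mulVec, Matrix.add_mulVec, dotProduct_sub,
        dotProduct_sub, dotProduct_add, matB_form, hA1, hA2, matB_form, matB_form,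
        Matrix.smul_mulVec, Matrix.one_mulVec, dotProduct_smul, symB_apply, symB_apply]
      set y : En n := WithLp.toLp 2 x with hy
      have hxx : x ⬝ᵥ x = inner ℝ y y := by
        rw [real_inner_self_eq_norm_sq, EuclideanSpace.norm_sq_eq, dotProduct]
        exact Finset.sum_congr rfl fun i _ => by rw [Real.norm_eq_abs, sq_abs, sq]
      have h1 := hD y
      rw [hHa] at h1
      rw [hxx, smul_eq_mul]
      have h2 : δ = 8 * η := by rw [hη]; ring
      rw [h2]
      linarith
  have hm2 : (-(ut a + vt b), -(p1 + p2), -(A1 + A2)) ∈ interior M := by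
    have := add_interior M M ((c - δ - (ut a + vt b), 0, P) : Jet n) (by
      intro x hx
      have h1 := hM.1.2.2.1 x hx P hPSD
      have h2 := hM.1.2.2.2 _ h1 (c - δ - (ut a + vt b)) (by linarith)
      convert h2 using 1
      ext1
      · simp [add_comm]
      · ext1
        · simp
        · simp [add_comm]) _ hm1
    convert this using 1
    ext1
    · simp; ring
    · ext1
      · simp
      · simp only [Prod.snd_add, hP]; abel
  have hfin := add_interior F M (ut a, p1, A1) (fun x hx => hFM (Set.add_mem_add J1 hx)) _ hm2
  apply J2
  rw [Set.mem_neg]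
  convert hfin using 1
  ext1
  · simp
  · ext1
    · simp
    · simp

/-- Constant coefficient subharmonic addition theorem. -/
theorem statement_17 {n : ℕ} (M : Set (Jet n)) (hM : IsMonotonicityConeSubequation M)
    (F : Set (Jet n)) (hF : IsCCSubequation F) (hFM : F + M ⊆ F)
    (X : Set (En n)) (hX : IsOpen X) (u v : En n → EReal)
    (hu : USCOn u X) (hv : USCOn v X)
    (huF : CCSubharmonicOn F u X) (hvF : CCSubharmonicOn (dualJ F) v X) :
    USCOn (fun x => u x + v x) X ∧ CCSubharmonicOn (dualJ M) (fun x => u x + v x) X := by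
  exact ⟨usc_add X u v hu hv, quad_core M hM F hFM X hX u v hu hv huF hvF⟩

end
end
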